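/- arXiv:2506.09618 — 5 statements merged into one kernel-verified Lean document; each statement's English description precedes it below -/
import Mathlib

section
/- Let C be an arbitrary set of corner minors of M and let 𝒲 denote the set of admissible sets W ⊆ V(C) for which P_W(C) is a minimal prime of I(C). Then I(C) = (⋂_{W ∈ 𝒲} P_W(C)) ∩ (⋂_{W ∈ 𝒲, W ≠ ∅} (I(C) + P_W(C)²)). -/
open MvPolynomial

/-- A 2-minor `[a₁,a₂|b₁,b₂]` (with `a₁ < a₂`, `b₁ < b₂`) of the `m × n` matrix
of indeterminates `M = (x_{ij})`. -/
structure Minor2 (m n : ℕ) where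
  a1 : Fin m
  a2 : Fin m
  b1 : Fin n
  b2 : Fin n
  ha : a1 < a2
  hb : b1 < b2

namespace Minor2

variable {m n : ℕ}

/-- The vertex set of a 2-minor. -/
def vertexSet (δ : Minor2 m n) : Set (Fin m × Fin n) :=
  {(δ.a1, δ.b1), (δ.a1, δ.b2), (δ.a2, δ.b1), (δ.a2, δ.b2)}

/-- `{p,q}` is one of the two vertical edges of the minor `δ`. -/
def VertEdge (δ : Minor2 m n) (p q : Fin m × Fin n) : Prop :=
  ({p, q} : Set (Fin m × Fin n)) = {(δ.a1, δ.b1), (δ.a2, δ.b1)} ∨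
  ({p, q} : Set (Fin m × Fin n)) = {(δ.a1, δ.b2), (δ.a2, δ.b2)}

/-- `{p,q}` is one of the two horizontal edges of the minor `δ`. -/
def HorizEdge (δ : Minor2 m n) (p q : Fin m × Fin n) : Prop :=
  ({p, q} : Set (Fin m × Fin n)) = {(δ.a1, δ.b1), (δ.a1, δ.b2)} ∨
  ({p, q} : Set (Fin m × Fin n)) = {(δ.a2, δ.b1), (δ.a2, δ.b2)}

/-- `{p,q}` is an edge (vertical or horizontal) of the minor `δ`. -/
def IsEdge (δ : Minor2 m n) (p q : Fin m × Fin n) : Prop :=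
  δ.VertEdge p q ∨ δ.HorizEdge p q

/-- The binomial `f_δ = x_{a₁b₁}x_{a₂b₂} − x_{a₁b₂}x_{a₂b₁}` of the 2-minor `δ`. -/
noncomputable def binom (K : Type*) [Field K] (δ : Minor2 m n) : MvPolynomial (Fin m × Fin n) K :=
  X (δ.a1, δ.b1) * X (δ.a2, δ.b2) - X (δ.a1, δ.b2) * X (δ.a2, δ.b1)

end Minor2

/-- The vertex set `V(C)` of a collection `C` of 2-minors. -/
def vertexSetOf {m n : ℕ} (C : Set (Minor2 m n)) : Set (Fin m × Fin n) :=
  ⋃ δ ∈ C, δ.vertexSet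

/-- The binomial ideal `I(C)` generated by the binomials of the minors in `C`. -/
noncomputable def minorIdeal (K : Type*) [Field K] {m n : ℕ} (C : Set (Minor2 m n)) :
    Ideal (MvPolynomial (Fin m × Fin n) K) :=
  Ideal.span {f | ∃ δ ∈ C, f = Minor2.binom K δ}

/-- Two positions are joined by a vertical edge of some minor of `C`. -/
def vertAdj {m n : ℕ} (C : Set (Minor2 m n)) (p q : Fin m × Fin n) : Prop :=
  ∃ δ ∈ C, δ.VertEdge p q

/-- Two positions are joined by a horizontal edge of some minor of `C`. -/
def horizAdj {m n : ℕ} (C : Set (Minor2 m n)) (p q : Fin m × Fin n) : Prop :=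
  ∃ δ ∈ C, δ.HorizEdge p q

/-- The maximal vertical interval of `C` containing a position, encoded as the class of the
position under connectivity by vertical edges of minors of `C`. -/
def vClass {m n : ℕ} (C : Set (Minor2 m n)) (p : Fin m × Fin n) : Quot (vertAdj C) :=
  Quot.mk _ p

/-- The maximal horizontal interval of `C` containing a position. -/
def hClass {m n : ℕ} (C : Set (Minor2 m n)) (p : Fin m × Fin n) : Quot (horizAdj C) :=
  Quot.mk _ p

/-- The monomial map `φ` with `φ(x_{ab}) = h_i v_j`, where `H_i` and `V_j` are the maximal
horizontal and vertical intervals of `C` containing `x_{ab}` (variables not appearing in any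
minor of `C` are sent to products of fresh variables, so that the kernel of `φ` is the
extension to `S` of the toric ideal `J_C ⊆ S_C`). -/
noncomputable def phiC (K : Type*) [Field K] {m n : ℕ} (C : Set (Minor2 m n)) :
    MvPolynomial (Fin m × Fin n) K →ₐ[K]
      MvPolynomial (Quot (horizAdj C) ⊕ Quot (vertAdj C)) K :=
  aeval fun p => X (Sum.inl (hClass C p)) * X (Sum.inr (vClass C p))

/-- The toric ideal `J_C = ker φ`. -/
noncomputable def toricIdeal (K : Type*) [Field K] {m n : ℕ} (C : Set (Minor2 m n)) :
    Ideal (MvPolynomial (Fin m × Fin n) K) :=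
  RingHom.ker (phiC K C)

/-- A subset `W ⊆ V(C)` is admissible if for every `δ ∈ C` either `W ∩ V(δ) = ∅`
or `W` contains an edge of `δ`. -/
def Admissible {m n : ℕ} (C : Set (Minor2 m n)) (W : Set (Fin m × Fin n)) : Prop :=
  W ⊆ vertexSetOf C ∧
    ∀ δ ∈ C, W ∩ δ.vertexSet = ∅ ∨ ∃ p q, p ∈ W ∧ q ∈ W ∧ δ.IsEdge p q

/-- `C' = {δ ∈ C : V(δ) ∩ W = ∅}`. -/
def minorsAvoiding {m n : ℕ} (C : Set (Minor2 m n)) (W : Set (Fin m × Fin n)) :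
    Set (Minor2 m n) :=
  {δ ∈ C | δ.vertexSet ∩ W = ∅}

/-- The ideal generated by the variables with index in `W`. -/
noncomputable def varIdeal (K : Type*) [Field K] {m n : ℕ} (W : Set (Fin m × Fin n)) :
    Ideal (MvPolynomial (Fin m × Fin n) K) :=
  Ideal.span ((fun p => (X p : MvPolynomial (Fin m × Fin n) K)) '' W)

/-- The prime ideal `P_W(C) = (x_{ij} : x_{ij} ∈ W) + J_{C'}`,
where `C' = {δ ∈ C : V(δ) ∩ W = ∅}`. -/
noncomputable def PW (K : Type*) [Field K] {m n : ℕ} (C : Set (Minor2 m n))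
    (W : Set (Fin m × Fin n)) : Ideal (MvPolynomial (Fin m × Fin n) K) :=
  varIdeal K W + toricIdeal K (minorsAvoiding C W)

/-- A cycle `σ : h_{i₁}, v_{j₁}, h_{i₂}, v_{j₂}, …, h_{i_r}, v_{j_r}` (`r ≥ 2`) of the
bipartite graph `G(C)`, recorded by the intersection vertices
`p k = H_{i_k} ∩ V_{j_k}` and `q k = H_{i_{k+1}} ∩ V_{j_k}` (indices cyclic, `r = len + 2`). -/
structure CycleIn {m n : ℕ} (C : Set (Minor2 m n)) where
  len : ℕ
  p : Fin (len + 2) → Fin m × Fin n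
  q : Fin (len + 2) → Fin m × Fin n
  p_mem : ∀ k, p k ∈ vertexSetOf C
  q_mem : ∀ k, q k ∈ vertexSetOf C
  shareV : ∀ k, vClass C (p k) = vClass C (q k)
  shareH : ∀ k, hClass C (q k) = hClass C (p (k + 1))
  injH : Function.Injective fun k => hClass C (p k)
  injV : Function.Injective fun k => vClass C (p k)

/-- The binomial `f_σ` associated to a cycle `σ` of `G(C)`. -/
noncomputable def cycleBinom (K : Type*) [Field K] {m n : ℕ} {C : Set (Minor2 m n)}
    (σ : CycleIn C) : MvPolynomial (Fin m × Fin n) K :=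
  (∏ k, X (σ.p k)) - (∏ k, X (σ.q k))

/-! ### Auxiliary material -/

section Aux

set_option linter.unusedSectionVars false

/-- `p` is the far corner of one of the corner minors of `C`. -/
def EdgeC {m n : ℕ} (C : Set (Minor2 m n)) (p : Fin m × Fin n) : Prop :=
  ∃ δ ∈ C, p = (δ.a2, δ.b2)

/-- The standard exponent vector. -/
noncomputable abbrev ex {m n : ℕ} (p : Fin m × Fin n) : (Fin m × Fin n) →₀ ℕ :=
  Finsupp.single p 1

/-- The class of a monomial modulo `I(C)`. -/
noncomputable def Mc (K : Type*) [Field K] {m n : ℕ} (C : Set (Minor2 m n))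
    (u : (Fin m × Fin n) →₀ ℕ) : MvPolynomial (Fin m × Fin n) K ⧸ minorIdeal K C :=
  Ideal.Quotient.mk (minorIdeal K C) (monomial u 1)

/-- The degree of a monomial under `φ`. -/
noncomputable def Dg {m n : ℕ} (C : Set (Minor2 m n)) (u : (Fin m × Fin n) →₀ ℕ) :
    (Quot (horizAdj C) ⊕ Quot (vertAdj C)) →₀ ℕ :=
  u.mapDomain (fun p => Sum.inl (hClass C p)) + u.mapDomain (fun p => Sum.inr (vClass C p))

/-- Linear map determined by its values on monomials. -/
noncomputable def Lf (K : Type*) [Field K] {σ : Type*} {N : Type*} [AddCommGroup N] [Module K N]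
    (A : (σ →₀ ℕ) → N) : MvPolynomial σ K →ₗ[K] N :=
  (basisMonomials σ K).constr K A

lemma Lf_monomial (K : Type*) [Field K] {σ : Type*} {N : Type*} [AddCommGroup N] [Module K N]
    (A : (σ →₀ ℕ) → N) (u : σ →₀ ℕ) (c : K) : Lf K A (monomial u c) = c • A u := by
  have h : Lf K A (monomial u 1) = A u := by
    have := (basisMonomials σ K).constr_basis K A u
    simpa [Lf] using this
  have h2 : (monomial u c : MvPolynomial σ K) = c • monomial u 1 := by
    rw [smul_monomial]; simp
  rw [h2, map_smul, h]

lemma Lf_apply (K : Type*) [Field K] {σ : Type*} {N : Type*} [AddCommGroup N] [Module K N]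
    (A : (σ →₀ ℕ) → N) (f : MvPolynomial σ K) :
    Lf K A f = ∑ v ∈ f.support, coeff v f • A v := by
  conv_lhs => rw [f.as_sum]
  rw [map_sum]
  exact Finset.sum_congr rfl fun v _ => Lf_monomial K A v _

variable {K : Type*} [Field K] {m n : ℕ} [NeZero m] [NeZero n] {C : Set (Minor2 m n)}

lemma binom_eq (hC : ∀ δ ∈ C, δ.a1 = 0 ∧ δ.b1 = 0) {δ : Minor2 m n} (h : δ ∈ C) :
    Minor2.binom K δ = X (0, 0) * X (δ.a2, δ.b2) - X (0, δ.b2) * X (δ.a2, 0) := by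
  unfold Minor2.binom
  rw [(hC δ h).1, (hC δ h).2]

lemma edge_ne (hC : ∀ δ ∈ C, δ.a1 = 0 ∧ δ.b1 = 0) {p : Fin m × Fin n} (h : EdgeC C p) :
    p.1 ≠ 0 ∧ p.2 ≠ 0 := by
  obtain ⟨δ, hδ, rfl⟩ := h
  have h1 := δ.ha
  have h2 := δ.hb
  rw [(hC δ hδ).1] at h1
  rw [(hC δ hδ).2] at h2
  exact ⟨h1.ne', h2.ne'⟩

lemma mem_V (hC : ∀ δ ∈ C, δ.a1 = 0 ∧ δ.b1 = 0) (p : Fin m × Fin n) :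
    p ∈ vertexSetOf C ↔
      ∃ e, EdgeC C e ∧ (p = (0, 0) ∨ p = (0, e.2) ∨ p = (e.1, 0) ∨ p = e) := by
  unfold vertexSetOf Minor2.vertexSet
  simp only [Set.mem_iUnion, Set.mem_insert_iff, Set.mem_singleton_iff, exists_prop]
  constructor
  · rintro ⟨δ, hδ, h⟩
    refine ⟨(δ.a2, δ.b2), ⟨δ, hδ, rfl⟩, ?_⟩
    rw [(hC δ hδ).1, (hC δ hδ).2] at h
    exact h
  · rintro ⟨e, ⟨δ, hδ, rfl⟩, h⟩
    refine ⟨δ, hδ, ?_⟩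
    rw [(hC δ hδ).1, (hC δ hδ).2]
    exact h

lemma V_row (hC : ∀ δ ∈ C, δ.a1 = 0 ∧ δ.b1 = 0) {p : Fin m × Fin n} (h : p ∈ vertexSetOf C)
    (h1 : p.1 ≠ 0) : p = (p.1, 0) ∨ EdgeC C p := by
  obtain ⟨e, he, rfl | rfl | rfl | rfl⟩ := (mem_V hC p).1 h <;> simp_all

lemma V_col (hC : ∀ δ ∈ C, δ.a1 = 0 ∧ δ.b1 = 0) {p : Fin m × Fin n} (h : p ∈ vertexSetOf C)
    (h1 : p.2 ≠ 0) : p = (0, p.2) ∨ EdgeC C p := by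
  obtain ⟨e, he, rfl | rfl | rfl | rfl⟩ := (mem_V hC p).1 h <;> simp_all

lemma edge_V (hC : ∀ δ ∈ C, δ.a1 = 0 ∧ δ.b1 = 0) {e : Fin m × Fin n} (h : EdgeC C e) :
    e ∈ vertexSetOf C ∧ ((0, 0) : Fin m × Fin n) ∈ vertexSetOf C ∧
      (e.1, 0) ∈ vertexSetOf C ∧ (0, e.2) ∈ vertexSetOf C := by
  refine ⟨?_, ?_, ?_, ?_⟩ <;> rw [mem_V hC] <;> exact ⟨e, h, by simp⟩

lemma Mc_add (u v : (Fin m × Fin n) →₀ ℕ) : Mc K C (u + v) = Mc K C u * Mc K C v := by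
  unfold Mc
  rw [← map_mul, monomial_mul, one_mul]

lemma Mc_zero : Mc K C 0 = 1 := by
  unfold Mc
  simp

lemma Mc_edge (hC : ∀ δ ∈ C, δ.a1 = 0 ∧ δ.b1 = 0) {e : Fin m × Fin n} (h : EdgeC C e) :
    Mc K C (ex (0, 0)) * Mc K C (ex e) = Mc K C (ex (e.1, 0)) * Mc K C (ex (0, e.2)) := by
  obtain ⟨δ, hδ, rfl⟩ := h
  unfold Mc
  rw [← map_mul, ← map_mul, Ideal.Quotient.eq]
  have : Minor2.binom K δ ∈ minorIdeal K C := Ideal.subset_span ⟨δ, hδ, rfl⟩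
  rw [binom_eq hC hδ] at this
  simp only [ex]
  change X _ * X _ - X _ * X _ ∈ _
  rwa [mul_comm (X ((δ.a2, δ.b2).1, 0))]

/-- Move-invariant functions give functionals vanishing on `I(C)`. -/
lemma Lf_minor (hC : ∀ δ ∈ C, δ.a1 = 0 ∧ δ.b1 = 0) {N : Type*} [AddCommGroup N] [Module K N]
    (A : ((Fin m × Fin n) →₀ ℕ) → N)
    (hA : ∀ e, EdgeC C e → ∀ w, A (w + (ex (0, 0) + ex e)) = A (w + (ex (e.1, 0) + ex (0, e.2))))
    {f : MvPolynomial (Fin m × Fin n) K} (hf : f ∈ minorIdeal K C) : Lf K A f = 0 := by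
  suffices h : ∀ a : MvPolynomial (Fin m × Fin n) K, Lf K A (a * f) = 0 by
    simpa using h 1
  unfold minorIdeal at hf
  induction hf using Submodule.span_induction with
  | mem x hx =>
    obtain ⟨δ, hδ, rfl⟩ := hx
    intro a
    rw [binom_eq hC hδ]
    induction a using MvPolynomial.induction_on' with
    | monomial u c =>
      have := hA _ ⟨δ, hδ, rfl⟩ u
      have e1 : (monomial u c * (X (0, 0) * X (δ.a2, δ.b2) - X (0, δ.b2) * X (δ.a2, 0)) :
          MvPolynomial (Fin m × Fin n) K) = monomial (u + (ex (0, 0) + ex (δ.a2, δ.b2))) c -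
          monomial (u + (ex (δ.a2, 0) + ex (0, δ.b2))) c := by
        simp only [X, monomial_mul, mul_sub, mul_one, ex]
        rw [add_comm (Finsupp.single (δ.a2, (0 : Fin n)) 1)]
      rw [e1, map_sub, Lf_monomial, Lf_monomial, this, sub_self]
    | add p q hp hq => rw [add_mul, map_add, hp, hq, add_zero]
  | zero => simp
  | add x y _ _ hx hy => intro a; rw [mul_add, map_add, hx, hy, add_zero]
  | smul b x _ hx => intro a; rw [smul_eq_mul, ← mul_assoc]; exact hx _

/-- Invariants of moves are determined by the class modulo `I(C)`. -/
lemma Mc_inv (hC : ∀ δ ∈ C, δ.a1 = 0 ∧ δ.b1 = 0) {α : Type*}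
    (A : ((Fin m × Fin n) →₀ ℕ) → α)
    (hA : ∀ e, EdgeC C e → ∀ w, A (w + (ex (0, 0) + ex e)) = A (w + (ex (e.1, 0) + ex (0, e.2))))
    {u v : (Fin m × Fin n) →₀ ℕ} (h : Mc K C u = Mc K C v) : A u = A v := by
  classical
  unfold Mc at h
  rw [Ideal.Quotient.eq] at h
  have := Lf_minor hC (fun w => if A w = A u then (1 : K) else 0)
    (fun e he w => by simp only [hA e he w]) h
  rw [map_sub, Lf_monomial, Lf_monomial] at this
  by_contra hne
  simp [Ne.symm hne] at this

lemma Dg_add (u v : (Fin m × Fin n) →₀ ℕ) : Dg C (u + v) = Dg C u + Dg C v := by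
  unfold Dg
  rw [Finsupp.mapDomain_add, Finsupp.mapDomain_add]
  abel

lemma phi_monomial (u : (Fin m × Fin n) →₀ ℕ) (c : K) :
    phiC K C (monomial u c) = monomial (Dg C u) c := by
  have key : ∀ u : (Fin m × Fin n) →₀ ℕ, phiC K C (monomial u 1) = monomial (Dg C u) 1 := by
    intro u
    induction u using Finsupp.induction_linear with
    | zero => simp [Dg]
    | add f g hf hg =>
      have : (monomial (f + g) 1 : MvPolynomial (Fin m × Fin n) K) =
        monomial f 1 * monomial g 1 := by simp [monomial_mul]
      rw [this, map_mul, hf, hg, Dg_add, monomial_mul, one_mul]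
    | single p k =>
      have : (monomial (Finsupp.single p k) 1 : MvPolynomial (Fin m × Fin n) K) = X p ^ k := by
        rw [X_pow_eq_monomial]
      rw [this, map_pow]
      simp only [phiC, aeval_X]
      simp only [Dg, Finsupp.mapDomain_single, X]
      rw [monomial_mul, monomial_pow]
      simp
  have h2 : (monomial u c : MvPolynomial (Fin m × Fin n) K) = c • monomial u 1 := by
    rw [smul_monomial]; simp
  rw [h2, map_smul, key, smul_monomial]; simp

/-- Functions of the degree give functionals vanishing on the toric ideal. -/
lemma Lf_toric {N : Type*} [AddCommGroup N] [Module K N]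
    (A : ((Fin m × Fin n) →₀ ℕ) → N) (hA : ∀ u v, Dg C u = Dg C v → A u = A v)
    {f : MvPolynomial (Fin m × Fin n) K} (hf : f ∈ toricIdeal K C) : Lf K A f = 0 := by
  have hf' : phiC K C f = 0 := hf
  have hA' : Function.FactorsThrough A (Dg C) := fun u v h => hA u v h
  have : Lf K A = (Lf K (Function.extend (Dg C) A 0)) ∘ₗ (phiC K C).toLinearMap := by
    apply (basisMonomials (Fin m × Fin n) K).ext
    intro u
    simp only [coe_basisMonomials, LinearMap.comp_apply, AlgHom.toLinearMap_apply]
    rw [phi_monomial, Lf_monomial, Lf_monomial, hA'.extend_apply]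
  rw [this, LinearMap.comp_apply, AlgHom.toLinearMap_apply, hf', map_zero]

lemma hAdj_inv {p q : Fin m × Fin n} (h : horizAdj C p q) :
    p ∈ vertexSetOf C ∧ q ∈ vertexSetOf C ∧ p.1 = q.1 := by
  obtain ⟨δ, hδ, h⟩ := h
  have hp : p ∈ ({p, q} : Set (Fin m × Fin n)) := by simp
  have hq : q ∈ ({p, q} : Set (Fin m × Fin n)) := by simp
  unfold vertexSetOf
  simp only [Set.mem_iUnion, exists_prop]
  rcases h with h | h <;> rw [h] at hp hq <;>
    simp only [Set.mem_insert_iff, Set.mem_singleton_iff] at hp hq <;>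
    refine ⟨⟨δ, hδ, ?_⟩, ⟨δ, hδ, ?_⟩, ?_⟩ <;> rcases hp with rfl | rfl <;>
    rcases hq with rfl | rfl <;> simp [Minor2.vertexSet]

lemma vAdj_inv {p q : Fin m × Fin n} (h : vertAdj C p q) :
    p ∈ vertexSetOf C ∧ q ∈ vertexSetOf C ∧ p.2 = q.2 := by
  obtain ⟨δ, hδ, h⟩ := h
  have hp : p ∈ ({p, q} : Set (Fin m × Fin n)) := by simp
  have hq : q ∈ ({p, q} : Set (Fin m × Fin n)) := by simp
  unfold vertexSetOf
  simp only [Set.mem_iUnion, exists_prop]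
  rcases h with h | h <;> rw [h] at hp hq <;>
    simp only [Set.mem_insert_iff, Set.mem_singleton_iff] at hp hq <;>
    refine ⟨⟨δ, hδ, ?_⟩, ⟨δ, hδ, ?_⟩, ?_⟩ <;> rcases hp with rfl | rfl <;>
    rcases hq with rfl | rfl <;> simp [Minor2.vertexSet]

lemma hClass_inv {p q : Fin m × Fin n} (h : hClass C p = hClass C q) :
    p = q ∨ (p ∈ vertexSetOf C ∧ q ∈ vertexSetOf C ∧ p.1 = q.1) := by
  classical
  let F : Fin m × Fin n → Fin m ⊕ (Fin m × Fin n) :=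
    fun p => if p ∈ vertexSetOf C then Sum.inl p.1 else Sum.inr p
  have hF : ∀ p q, horizAdj C p q → F p = F q := by
    intro p q h
    obtain ⟨h1, h2, h3⟩ := hAdj_inv h
    simp [F, h1, h2, h3]
  have := congrArg (Quot.lift F hF) h
  change F p = F q at this
  simp only [F] at this
  split_ifs at this <;> simp_all

lemma vClass_inv {p q : Fin m × Fin n} (h : vClass C p = vClass C q) :
    p = q ∨ (p ∈ vertexSetOf C ∧ q ∈ vertexSetOf C ∧ p.2 = q.2) := by
  classical
  let F : Fin m × Fin n → Fin n ⊕ (Fin m × Fin n) :=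
    fun p => if p ∈ vertexSetOf C then Sum.inl p.2 else Sum.inr p
  have hF : ∀ p q, vertAdj C p q → F p = F q := by
    intro p q h
    obtain ⟨h1, h2, h3⟩ := vAdj_inv h
    simp [F, h1, h2, h3]
  have := congrArg (Quot.lift F hF) h
  change F p = F q at this
  simp only [F] at this
  split_ifs at this <;> simp_all

lemma Dg_inl (u : (Fin m × Fin n) →₀ ℕ) (q : Quot (horizAdj C)) :
    Dg C u (Sum.inl q) ≠ 0 ↔ ∃ p, u p ≠ 0 ∧ hClass C p = q := by
  classical
  induction u using Finsupp.induction_linear with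
  | zero => simp [Dg]
  | add f g hf hg =>
    rw [Dg_add, Finsupp.add_apply, ne_eq, Nat.add_eq_zero_iff, not_and_or, ← ne_eq, ← ne_eq,
      hf, hg, ← exists_or]
    refine exists_congr fun p => ?_
    rw [Finsupp.add_apply]
    grind
  | single p k =>
    simp only [Dg, Finsupp.mapDomain_single, Finsupp.add_apply, Finsupp.single_apply]
    constructor
    · intro h
      refine ⟨p, ?_⟩
      simp at h
      simpa [and_comm] using h
    · rintro ⟨p', h1, rfl⟩
      have : p = p' ∧ k ≠ 0 := by grind
      obtain ⟨rfl, h2⟩ := this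
      simpa using h2

lemma Dg_inr (u : (Fin m × Fin n) →₀ ℕ) (q : Quot (vertAdj C)) :
    Dg C u (Sum.inr q) ≠ 0 ↔ ∃ p, u p ≠ 0 ∧ vClass C p = q := by
  classical
  induction u using Finsupp.induction_linear with
  | zero => simp [Dg]
  | add f g hf hg =>
    rw [Dg_add, Finsupp.add_apply, ne_eq, Nat.add_eq_zero_iff, not_and_or, ← ne_eq, ← ne_eq,
      hf, hg, ← exists_or]
    refine exists_congr fun p => ?_
    rw [Finsupp.add_apply]
    grind
  | single p k =>
    simp only [Dg, Finsupp.mapDomain_single, Finsupp.add_apply, Finsupp.single_apply]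
    constructor
    · intro h
      refine ⟨p, ?_⟩
      simp at h
      simpa [and_comm] using h
    · rintro ⟨p', h1, rfl⟩
      have : p = p' ∧ k ≠ 0 := by grind
      obtain ⟨rfl, h2⟩ := this
      simpa using h2

lemma Dg_row {y z : (Fin m × Fin n) →₀ ℕ} (h : Dg C y = Dg C z) {p : Fin m × Fin n}
    (hp : z p ≠ 0) :
    ∃ r, y r ≠ 0 ∧ (r = p ∨ (r ∈ vertexSetOf C ∧ p ∈ vertexSetOf C ∧ r.1 = p.1)) := by
  have h1 := (Dg_inl (C := C) z (hClass C p)).2 ⟨p, hp, rfl⟩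
  rw [← h, Dg_inl] at h1
  obtain ⟨r, hr, hr2⟩ := h1
  exact ⟨r, hr, hClass_inv hr2⟩

lemma Dg_col {y z : (Fin m × Fin n) →₀ ℕ} (h : Dg C y = Dg C z) {p : Fin m × Fin n}
    (hp : z p ≠ 0) :
    ∃ r, y r ≠ 0 ∧ (r = p ∨ (r ∈ vertexSetOf C ∧ p ∈ vertexSetOf C ∧ r.2 = p.2)) := by
  have h1 := (Dg_inr (C := C) z (vClass C p)).2 ⟨p, hp, rfl⟩
  rw [← h, Dg_inr] at h1
  obtain ⟨r, hr, hr2⟩ := h1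
  exact ⟨r, hr, vClass_inv hr2⟩

lemma horiz_of (p q : Fin m × Fin n) (h : horizAdj C p q) : hClass C p = hClass C q :=
  Quot.sound h

lemma vert_of (p q : Fin m × Fin n) (h : vertAdj C p q) : vClass C p = vClass C q :=
  Quot.sound h

lemma Dg_move (hC : ∀ δ ∈ C, δ.a1 = 0 ∧ δ.b1 = 0) {e : Fin m × Fin n} (he : EdgeC C e) :
    Dg C (ex (0, 0) + ex e) = Dg C (ex (e.1, 0) + ex (0, e.2)) := by
  obtain ⟨δ, hδ, rfl⟩ := he
  have h1 : hClass C (0, 0) = hClass C (0, δ.b2) :=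
    horiz_of _ _ ⟨δ, hδ, Or.inl (by rw [(hC δ hδ).1, (hC δ hδ).2])⟩
  have h2 : hClass C (δ.a2, 0) = hClass C (δ.a2, δ.b2) :=
    horiz_of _ _ ⟨δ, hδ, Or.inr (by rw [(hC δ hδ).2])⟩
  have h3 : vClass C (0, 0) = vClass C (δ.a2, 0) :=
    vert_of _ _ ⟨δ, hδ, Or.inl (by rw [(hC δ hδ).1, (hC δ hδ).2])⟩
  have h4 : vClass C (0, δ.b2) = vClass C (δ.a2, δ.b2) :=
    vert_of _ _ ⟨δ, hδ, Or.inr (by rw [(hC δ hδ).1])⟩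
  rw [Dg_add, Dg_add]
  simp only [Dg, Finsupp.mapDomain_single, ex]
  rw [h1, h2, h3, h4]
  abel

lemma Dg_of_Mc (hC : ∀ δ ∈ C, δ.a1 = 0 ∧ δ.b1 = 0)
    {u v : (Fin m × Fin n) →₀ ℕ} (h : Mc K C u = Mc K C v) : Dg C u = Dg C v :=
  Mc_inv hC (Dg C) (fun e he w => by rw [Dg_add, Dg_move hC he, ← Dg_add]) h

lemma split1 {y : (Fin m × Fin n) →₀ ℕ} {p : Fin m × Fin n} (h : y p ≠ 0) :
    ∃ y1, y = ex p + y1 := by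
  refine ⟨y - ex p, ?_⟩
  rw [add_tsub_cancel_of_le]
  rw [Finsupp.single_le_iff]
  omega

lemma split2 {y : (Fin m × Fin n) →₀ ℕ} {p q : Fin m × Fin n} (h : y p ≠ 0) (h' : y q ≠ 0)
    (hne : p ≠ q) : ∃ y1, y = ex p + (ex q + y1) := by
  obtain ⟨y1, rfl⟩ := split1 h
  have : y1 q ≠ 0 := by
    simpa [ex, Finsupp.single_apply, hne] using h'
  obtain ⟨y2, rfl⟩ := split1 this
  exact ⟨y2, rfl⟩

lemma ex_pos (p : Fin m × Fin n) (y : (Fin m × Fin n) →₀ ℕ) : (ex p + y) p ≠ 0 := by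
  simp [ex]

lemma key (hC : ∀ δ ∈ C, δ.a1 = 0 ∧ δ.b1 = 0) : ∀ (N : ℕ) (z y : (Fin m × Fin n) →₀ ℕ),
    z.degree = N → Dg C y = Dg C (ex (0, 0) + z) →
    Mc K C (ex (0, 0)) * Mc K C y = Mc K C (ex (0, 0)) * Mc K C (ex (0, 0)) * Mc K C z := by
  intro N
  induction N using Nat.strong_induction_on with
  | _ N ih =>
  intro z y hN hD
  -- cancellation of a common variable after a modification of `y`
  have cancel' : ∀ (g : Fin m × Fin n) (y2 : (Fin m × Fin n) →₀ ℕ),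
      Mc K C (ex (0, 0)) * Mc K C y = Mc K C (ex (0, 0)) * (Mc K C (ex g) * Mc K C y2) → z g ≠ 0 →
      Mc K C (ex (0, 0)) * Mc K C y = Mc K C (ex (0, 0)) * Mc K C (ex (0, 0)) * Mc K C z := by
    intro g y2 h hz
    obtain ⟨z1, rfl⟩ := split1 hz
    have h3 : Dg C (ex (0, 0) + y) = Dg C (ex (0, 0) + (ex g + y2)) := by
      apply Dg_of_Mc (K := K) hC
      rw [Mc_add, Mc_add, Mc_add, h]
    have h4 : Dg C y2 = Dg C (ex (0, 0) + z1) := by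
      simp only [Dg_add] at h3 hD ⊢
      rw [hD] at h3
      have h5 : (Dg C (ex (0, 0)) + Dg C (ex g)) + (Dg C (ex (0, 0)) + Dg C z1) =
          (Dg C (ex (0, 0)) + Dg C (ex g)) + Dg C y2 := by
        rw [add_assoc _ _ (Dg C y2), ← h3]; abel
      exact (add_left_cancel h5).symm
    have hlt : z1.degree < N := by
      rw [← hN, map_add]
      simp [ex]
    have := ih _ hlt z1 y2 rfl h4
    rw [h, Mc_add]
    linear_combination Mc K C (ex g) * this
  have cancel : ∀ (g : Fin m × Fin n), y g ≠ 0 → z g ≠ 0 →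
      Mc K C (ex (0, 0)) * Mc K C y = Mc K C (ex (0, 0)) * Mc K C (ex (0, 0)) * Mc K C z := by
    intro g hy hz
    obtain ⟨y2, rfl⟩ := split1 hy
    exact cancel' g y2 (by rw [Mc_add]) hz
  by_cases hty : y (0, 0) ≠ 0
  · obtain ⟨y1, rfl⟩ := split1 hty
    have hD1 : Dg C y1 = Dg C z := by
      rw [Dg_add, Dg_add] at hD
      exact add_left_cancel hD
    have y1y : ∀ g, y1 g ≠ 0 → (ex (0, 0) + y1 : (Fin m × Fin n) →₀ ℕ) g ≠ 0 := by
      intro g hg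
      rw [Finsupp.add_apply]
      omega
    by_cases hchip : ∃ p, EdgeC C p ∧ z p ≠ 0
    · obtain ⟨p, hp, hzp⟩ := hchip
      obtain ⟨r, hr, hr'⟩ := Dg_row hD1 hzp
      obtain ⟨s, hs, hs'⟩ := Dg_col hD1 hzp
      by_cases hrp : r = p
      · subst hrp
        exact cancel r (y1y _ hr) hzp
      by_cases hsp : s = p
      · subst hsp
        exact cancel s (y1y _ hs) hzp
      obtain ⟨hrV, -, hr1⟩ := hr'.resolve_left hrp
      obtain ⟨hsV, -, hs1⟩ := hs'.resolve_left hsp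
      have hrs : r ≠ s := by
        rintro rfl
        exact hrp (Prod.ext hr1 hs1)
      obtain ⟨y2, rfl⟩ := split2 hr hs hrs
      have hpe := Mc_edge (K := K) hC hp
      rcases V_row hC hrV (by rw [hr1]; exact (edge_ne hC hp).1) with hra | hre
      · rw [hr1] at hra
        subst hra
        rcases V_col hC hsV (by rw [hs1]; exact (edge_ne hC hp).2) with hsb | hse
        · rw [hs1] at hsb
          subst hsb
          refine cancel' p (ex (0, 0) + (ex (0, 0) + y2)) ?_ hzp
          simp only [Mc_add]
          linear_combination (-Mc K C (ex (0, 0)) * Mc K C (ex (0, 0)) * Mc K C y2) * hpe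
        · refine cancel' p (ex (0, 0) + (ex (s.1, 0) + y2)) ?_ hzp
          have hse' := Mc_edge (K := K) hC hse
          rw [hs1] at hse'
          simp only [Mc_add]
          linear_combination (Mc K C (ex (0, 0)) * Mc K C (ex (p.1, 0)) * Mc K C y2) * hse' -
            (Mc K C (ex (0, 0)) * Mc K C (ex (s.1, 0)) * Mc K C y2) * hpe
      · have hre' := Mc_edge (K := K) hC hre
        rw [hr1] at hre'
        rcases V_col hC hsV (by rw [hs1]; exact (edge_ne hC hp).2) with hsb | hse
        · rw [hs1] at hsb
          subst hsb
          refine cancel' p (ex (0, 0) + (ex (0, r.2) + y2)) ?_ hzp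
          simp only [Mc_add]
          linear_combination (Mc K C (ex (0, 0)) * Mc K C (ex (0, p.2)) * Mc K C y2) * hre' -
            (Mc K C (ex (0, 0)) * Mc K C (ex (0, r.2)) * Mc K C y2) * hpe
        · refine cancel' p (ex (s.1, 0) + (ex (0, r.2) + y2)) ?_ hzp
          have hse' := Mc_edge (K := K) hC hse
          rw [hs1] at hse'
          simp only [Mc_add]
          linear_combination (Mc K C (ex (0, 0)) * Mc K C (ex s) * Mc K C y2) * hre' +
            (Mc K C (ex (p.1, 0)) * Mc K C (ex (0, r.2)) * Mc K C y2) * hse' -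
            (Mc K C (ex (s.1, 0)) * Mc K C (ex (0, r.2)) * Mc K C y2) * hpe
    · push Not at hchip
      -- a chip of `y1` whose legs are in `z`
      have legs : ∀ r, EdgeC C r → y1 r ≠ 0 → z (r.1, 0) ≠ 0 → z (0, r.2) ≠ 0 →
          Mc K C (ex (0, 0)) * Mc K C (ex (0, 0) + y1) =
            Mc K C (ex (0, 0)) * Mc K C (ex (0, 0)) * Mc K C z := by
        intro r hr hy hz1 hz2
        obtain ⟨y2, rfl⟩ := split1 hy
        obtain ⟨z1, rfl⟩ := split2 hz1 hz2 (by
          intro h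
          exact (edge_ne hC hr).1 (Prod.ext_iff.1 h).1)
        have hre := Mc_edge (K := K) hC hr
        have h4 : Dg C y2 = Dg C (ex (0, 0) + z1) := by
          have h5 : Dg C (ex r + y2) = Dg C (ex r + (ex (0, 0) + z1)) := by
            rw [hD1, ← add_assoc, Dg_add, ← Dg_move hC hr, ← Dg_add]
            congr 1
            abel
          rw [Dg_add, Dg_add (ex r) (ex (0, 0) + z1)] at h5
          exact add_left_cancel h5
        have hlt : z1.degree < N := by
          rw [← hN, map_add, map_add]
          simp [ex]
          omega
        have := ih _ hlt z1 y2 rfl h4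
        simp only [Mc_add]
        linear_combination (Mc K C (ex (0, 0)) * Mc K C (ex r)) * this +
          (Mc K C (ex (0, 0)) * Mc K C (ex (0, 0)) * Mc K C z1) * hre
      by_cases hz : z = 0
      · subst hz
        have : y1 = 0 := by
          ext g
          by_contra hg
          obtain ⟨r, hr, -⟩ := Dg_row hD1.symm hg
          simp at hr
        subst this
        simp [Mc_zero]
      · obtain ⟨p, hp⟩ : ∃ p, z p ≠ 0 := by
          by_contra h
          push Not at h
          exact hz (Finsupp.ext h)
        -- row case
        have rowc : ∀ p, z p ≠ 0 → p.1 ≠ 0 → Mc K C (ex (0, 0)) * Mc K C (ex (0, 0) + y1) =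
            Mc K C (ex (0, 0)) * Mc K C (ex (0, 0)) * Mc K C z := by
          intro p hp h1
          obtain ⟨r, hr, rfl | ⟨hrV, hpV, hr1⟩⟩ := Dg_row hD1 hp
          · exact cancel r (y1y _ hr) hp
          have hpa := (V_row hC hpV h1).resolve_right (fun h => hp (hchip p h))
          rcases V_row hC hrV (by rw [hr1]; exact h1) with hra | hre
          · have : r = p := by rw [hra, hpa, hr1]
            subst this
            exact cancel r (y1y _ hr) hp
          · obtain ⟨s, hs, rfl | ⟨hsV, -, hs1⟩⟩ := Dg_col hD1.symm hr
            · exact cancel s (y1y _ hr) hs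
            have hsb := (V_col hC hsV (by rw [hs1]; exact (edge_ne hC hre).2)).resolve_right
              (fun h => hs (hchip s h))
            refine legs r hre hr ?_ ?_
            · rw [hr1, ← hpa]; exact hp
            · rw [← hs1, ← hsb]; exact hs
        have colc : ∀ p, z p ≠ 0 → p.2 ≠ 0 → Mc K C (ex (0, 0)) * Mc K C (ex (0, 0) + y1) =
            Mc K C (ex (0, 0)) * Mc K C (ex (0, 0)) * Mc K C z := by
          intro p hp h1
          obtain ⟨r, hr, rfl | ⟨hrV, hpV, hr1⟩⟩ := Dg_col hD1 hp
          · exact cancel r (y1y _ hr) hp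
          have hpa := (V_col hC hpV h1).resolve_right (fun h => hp (hchip p h))
          rcases V_col hC hrV (by rw [hr1]; exact h1) with hra | hre
          · have : r = p := by rw [hra, hpa, hr1]
            subst this
            exact cancel r (y1y _ hr) hp
          · obtain ⟨s, hs, rfl | ⟨hsV, -, hs1⟩⟩ := Dg_row hD1.symm hr
            · exact cancel s (y1y _ hr) hs
            have hsb := (V_row hC hsV (by rw [hs1]; exact (edge_ne hC hre).1)).resolve_right
              (fun h => hs (hchip s h))
            refine legs r hre hr ?_ ?_
            · rw [← hs1, ← hsb]; exact hs
            · rw [hr1, ← hpa]; exact hp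
        by_cases h1 : p.1 ≠ 0
        · exact rowc p hp h1
        by_cases h2 : p.2 ≠ 0
        · exact colc p hp h2
        push Not at h1 h2
        have hp0 : p = (0, 0) := Prod.ext h1 h2
        exact cancel p (by rw [hp0]; exact hty) hp
  · push Not at hty
    obtain ⟨s, hs, hs'⟩ := Dg_col hD (ex_pos (0, 0) z)
    have hs0 : s ≠ (0, 0) := fun h => hs (by rw [h]; exact hty)
    obtain ⟨hsV, h0V, hs1⟩ := hs'.resolve_left hs0
    have hs2 : s.1 ≠ 0 := fun h => hs0 (Prod.ext h hs1)
    have hsa : s = (s.1, 0) := Prod.ext rfl hs1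
    obtain ⟨g, hg, hg'⟩ := Dg_row hD.symm hs
    have hg1 : g.1 = s.1 := by
      rcases hg' with rfl | h
      · rfl
      · exact h.2.2
    have hgV : g ∈ vertexSetOf C := by
      rcases hg' with rfl | h
      · exact hsV
      · exact h.1
    have hgz : z g ≠ 0 := by
      have : ((0, 0) : Fin m × Fin n) ≠ g := by
        rintro rfl
        exact hs2 hg1.symm
      simpa [ex, Finsupp.single_apply, this] using hg
    rcases V_row hC hgV (by rw [hg1]; exact hs2) with hga | hge
    · have : g = s := by rw [hga, hg1, ← hsa]
      subst this
      exact cancel g hs hgz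
    · have hge' := Mc_edge (K := K) hC hge
      obtain ⟨h, hh, hh'⟩ := Dg_col hD (p := g) (by rw [Finsupp.add_apply]; omega)
      by_cases hhg : h = g
      · subst hhg
        exact cancel h hh hgz
      obtain ⟨hhV, -, hh1⟩ := hh'.resolve_left hhg
      have hh2 : h.2 ≠ 0 := by rw [hh1]; exact (edge_ne hC hge).2
      have hsh : s ≠ h := by
        rintro rfl
        exact hh2 hs1
      obtain ⟨y2, rfl⟩ := split2 hs hh hsh
      rw [hg1, ← hsa] at hge'
      rcases V_col hC hhV hh2 with hhb | hhe
      · rw [hh1] at hhb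
        rw [← hhb] at hge'
        refine cancel' g (ex (0, 0) + y2) ?_ hgz
        simp only [Mc_add]
        linear_combination (-Mc K C (ex (0, 0)) * Mc K C y2) * hge'
      · have hhe' := Mc_edge (K := K) hC hhe
        rw [hh1] at hhe'
        refine cancel' g (ex (h.1, 0) + y2) ?_ hgz
        simp only [Mc_add]
        linear_combination (Mc K C (ex s) * Mc K C y2) * hhe' -
          (Mc K C (ex (h.1, 0)) * Mc K C y2) * hge'

/-- Monomials of equal degree become congruent after multiplication with `x₀₀²`. -/
lemma key2 (hC : ∀ δ ∈ C, δ.a1 = 0 ∧ δ.b1 = 0) {u v : (Fin m × Fin n) →₀ ℕ}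
    (h : Dg C u = Dg C v) :
    Mc K C (ex (0, 0)) * Mc K C (ex (0, 0)) * Mc K C u =
      Mc K C (ex (0, 0)) * Mc K C (ex (0, 0)) * Mc K C v := by
  have := key (K := K) hC _ v (ex (0, 0) + u) rfl (by rw [Dg_add, Dg_add, h])
  rw [← this, Mc_add]
  ring

lemma toric_sq (hC : ∀ δ ∈ C, δ.a1 = 0 ∧ δ.b1 = 0) {f : MvPolynomial (Fin m × Fin n) K}
    (hf : f ∈ toricIdeal K C) : X (0, 0) * X (0, 0) * f ∈ minorIdeal K C := by
  have h := Lf_toric (fun u => Mc K C (ex (0, 0)) * Mc K C (ex (0, 0)) * Mc K C u)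
    (fun u v h => key2 hC h) hf
  rw [← Ideal.Quotient.eq_zero_iff_mem, ← h, Lf_apply]
  conv_lhs => rw [f.as_sum]
  rw [Finset.mul_sum, map_sum]
  refine Finset.sum_congr rfl fun v _ => ?_
  have h2 : (monomial v (coeff v f) : MvPolynomial (Fin m × Fin n) K) =
    coeff v f • monomial v 1 := by rw [smul_monomial]; simp
  rw [h2, mul_smul_comm]
  rfl

lemma X_not_mem_toric (p : Fin m × Fin n) : (X p : MvPolynomial (Fin m × Fin n) K) ∉
    toricIdeal K C := by
  intro h
  have h' : phiC K C (monomial (ex p) 1) = 0 := h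
  rw [phi_monomial] at h'
  simp at h'

instance toric_prime : (toricIdeal K C).IsPrime := by
  unfold toricIdeal
  exact RingHom.ker_isPrime _

lemma minor_le_toric (hC : ∀ δ ∈ C, δ.a1 = 0 ∧ δ.b1 = 0) : minorIdeal K C ≤ toricIdeal K C := by
  unfold minorIdeal
  rw [Ideal.span_le]
  rintro f ⟨δ, hδ, rfl⟩
  rw [binom_eq hC hδ]
  have e1 : ((X (0, 0) * X (δ.a2, δ.b2) - X (0, δ.b2) * X (δ.a2, 0)) :
      MvPolynomial (Fin m × Fin n) K) = monomial ((ex (0, 0) + ex (δ.a2, δ.b2))) 1 -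
      monomial ((ex (δ.a2, 0) + ex (0, δ.b2))) 1 := by
    simp only [X, monomial_mul, mul_one, ex]
    rw [add_comm (Finsupp.single (δ.a2, (0 : Fin n)) 1)]
  rw [e1]
  change phiC K C _ = 0
  rw [map_sub, phi_monomial, phi_monomial, Dg_move hC ⟨δ, hδ, rfl⟩, sub_self]

lemma toric_le_prime (hC : ∀ δ ∈ C, δ.a1 = 0 ∧ δ.b1 = 0)
    {Q : Ideal (MvPolynomial (Fin m × Fin n) K)} (hQ : Q.IsPrime) (hI : minorIdeal K C ≤ Q)
    (ht : X (0, 0) ∉ Q) : toricIdeal K C ≤ Q := by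
  intro f hf
  have := hI (toric_sq hC hf)
  rcases hQ.mem_or_mem this with h | h
  · exact absurd ((hQ.mem_or_mem h).elim id id) ht
  · exact h

lemma mem_toric_of_Dg {u v : (Fin m × Fin n) →₀ ℕ} (h : Dg C u = Dg C v) :
    (monomial u 1 - monomial v 1 : MvPolynomial (Fin m × Fin n) K) ∈ toricIdeal K C := by
  change phiC K C _ = 0
  rw [map_sub, phi_monomial, phi_monomial, h, sub_self]

lemma toric_empty : toricIdeal K (∅ : Set (Minor2 m n)) = ⊥ := by
  rw [eq_bot_iff]
  intro f hf
  have h := toric_sq (by simp) hf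
  have h0 : minorIdeal K (∅ : Set (Minor2 m n)) = ⊥ := by
    simp [minorIdeal]
  rw [h0] at h
  simpa using h

/-- `(A, B)` is a vertex cover of the bipartite graph of `C`. -/
def IsCov (C : Set (Minor2 m n)) (A : Set (Fin m)) (B : Set (Fin n)) : Prop :=
  ∀ e, EdgeC C e → e.1 ∈ A ∨ e.2 ∈ B

/-- `(A, B)` is a minimal vertex cover of the bipartite graph of `C`. -/
structure MinCov (C : Set (Minor2 m n)) (A : Set (Fin m)) (B : Set (Fin n)) : Prop where
  cov : IsCov C A B
  rows : ∀ i ∈ A, ∃ e, EdgeC C e ∧ e.1 = i ∧ e.2 ∉ B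
  cols : ∀ j ∈ B, ∃ e, EdgeC C e ∧ e.2 = j ∧ e.1 ∉ A

lemma exists_minCov {A : Set (Fin m)} {B : Set (Fin n)} (h : IsCov C A B) :
    ∃ A' B', A' ⊆ A ∧ B' ⊆ B ∧ MinCov C A' B' := by
  obtain ⟨⟨A', B'⟩, hle, hmin⟩ := (Set.toFinite
    {P : Set (Fin m) × Set (Fin n) | IsCov C P.1 P.2}).exists_le_minimal
    (show (A, B) ∈ {P : Set (Fin m) × Set (Fin n) | IsCov C P.1 P.2} from h)
  have hcov : IsCov C A' B' := hmin.1
  refine ⟨A', B', hle.1, hle.2, hcov, ?_, ?_⟩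
  · intro i hi
    by_contra hcon
    push Not at hcon
    have h1 : IsCov C (A' \ {i}) B' := by
      intro e he
      by_cases hei : e.1 = i
      · exact Or.inr (hcon e he hei)
      · rcases hcov e he with h | h
        · exact Or.inl ⟨h, hei⟩
        · exact Or.inr h
    have h2 := hmin.2 (y := (A' \ {i}, B')) h1 ⟨Set.sdiff_subset, le_refl _⟩
    exact (h2.1 hi).2 rfl
  · intro j hj
    by_contra hcon
    push Not at hcon
    have h1 : IsCov C A' (B' \ {j}) := by
      intro e he
      by_cases hej : e.2 = j
      · exact Or.inl (hcon e he hej)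
      · rcases hcov e he with h | h
        · exact Or.inl h
        · exact Or.inr ⟨h, hej⟩
    have h2 := hmin.2 (y := (A', B' \ {j})) h1 ⟨le_refl _, Set.sdiff_subset⟩
    exact (h2.2 hj).2 rfl

/-- The set of variables attached to a vertex cover. -/
def WS (A : Set (Fin m)) (B : Set (Fin n)) : Set (Fin m × Fin n) :=
  {p | p = (0, 0) ∨ (p.2 = 0 ∧ p.1 ∈ A) ∨ (p.1 = 0 ∧ p.2 ∈ B)}

open Classical in
/-- The weight of a variable attached to a vertex cover. -/
noncomputable def wv (C : Set (Minor2 m n)) (A : Set (Fin m)) (B : Set (Fin n))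
    (p : Fin m × Fin n) : ℕ :=
  if p ∈ WS A B then 1 else if EdgeC C p ∧ p.1 ∈ A ∧ p.2 ∈ B then 1 else 0

/-- The weight of a monomial attached to a vertex cover. -/
noncomputable def wt (C : Set (Minor2 m n)) (A : Set (Fin m)) (B : Set (Fin n))
    (u : (Fin m × Fin n) →₀ ℕ) : ℕ := Finsupp.linearCombination ℕ (wv C A B) u

lemma wt_add (A : Set (Fin m)) (B : Set (Fin n)) (u v : (Fin m × Fin n) →₀ ℕ) :
    wt C A B (u + v) = wt C A B u + wt C A B v := by
  simp [wt]

lemma wt_ex (A : Set (Fin m)) (B : Set (Fin n)) (p : Fin m × Fin n) :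
    wt C A B (ex p) = wv C A B p := by
  simp [wt, ex]

lemma wv_WS {A : Set (Fin m)} {B : Set (Fin n)} {p : Fin m × Fin n} (h : p ∈ WS A B) :
    wv C A B p = 1 := by
  simp [wv, h]

lemma wt_eq_zero {A : Set (Fin m)} {B : Set (Fin n)} {u : (Fin m × Fin n) →₀ ℕ}
    (h : ∀ p, u p ≠ 0 → wv C A B p = 0) : wt C A B u = 0 := by
  unfold wt
  rw [Finsupp.linearCombination_apply, Finsupp.sum]
  refine Finset.sum_eq_zero fun p hp => ?_
  rw [h p (by simpa using hp), smul_zero]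

lemma le_wt {A : Set (Fin m)} {B : Set (Fin n)} {u : (Fin m × Fin n) →₀ ℕ} {p : Fin m × Fin n}
    (h : u p ≠ 0) : wv C A B p ≤ wt C A B u := by
  obtain ⟨u1, rfl⟩ := split1 h
  rw [wt_add, wt_ex]
  omega

lemma wv_move (hC : ∀ δ ∈ C, δ.a1 = 0 ∧ δ.b1 = 0) {A : Set (Fin m)} {B : Set (Fin n)}
    (hcov : IsCov C A B) {e : Fin m × Fin n} (he : EdgeC C e) :
    wv C A B (0, 0) + wv C A B e = wv C A B (e.1, 0) + wv C A B (0, e.2) := by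
  have hne := edge_ne hC he
  have h1 : wv C A B (0, 0) = 1 := wv_WS (Or.inl rfl)
  have ha : ¬ EdgeC C (e.1, 0) := fun h => (edge_ne hC h).2 rfl
  have hb : ¬ EdgeC C (0, e.2) := fun h => (edge_ne hC h).1 rfl
  have he' : e ∉ WS A B := by
    rintro (h | h | h)
    · rw [h] at hne; exact hne.1 rfl
    · exact hne.2 h.1
    · exact hne.1 h.1
  have hA : (e.1, 0) ∈ WS A B ↔ e.1 ∈ A := by
    simp [WS, hne.1]
  have hB : (0, e.2) ∈ WS A B ↔ e.2 ∈ B := by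
    simp [WS, hne.2]
  rw [h1]
  have := hcov e he
  simp only [wv, ha, hb, he', he, hA, hB, false_and, true_and, if_false]
  by_cases h3 : e.1 ∈ A <;> by_cases h4 : e.2 ∈ B <;> simp_all

lemma wt_Mc (hC : ∀ δ ∈ C, δ.a1 = 0 ∧ δ.b1 = 0) {A : Set (Fin m)} {B : Set (Fin n)}
    (hcov : IsCov C A B) {u v : (Fin m × Fin n) →₀ ℕ} (h : Mc K C u = Mc K C v) :
    wt C A B u = wt C A B v :=
  Mc_inv hC _ (fun e he w => by simp only [wt_add, wt_ex, wv_move hC hcov he]) h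

lemma wt_Dg (K : Type*) [Field K] (hC : ∀ δ ∈ C, δ.a1 = 0 ∧ δ.b1 = 0) {A : Set (Fin m)}
    {B : Set (Fin n)} (hcov : IsCov C A B) {u v : (Fin m × Fin n) →₀ ℕ} (h : Dg C u = Dg C v) :
    wt C A B u = wt C A B v := by
  have h2 := key2 (K := K) hC h
  simp only [← Mc_add] at h2
  have h3 := wt_Mc hC hcov h2
  simp only [wt_add] at h3
  omega

lemma mem_var (W : Set (Fin m × Fin n)) (f : MvPolynomial (Fin m × Fin n) K) :
    f ∈ varIdeal K W ↔ ∀ v ∈ f.support, ∃ p ∈ W, v p ≠ 0 := by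
  unfold varIdeal
  exact mem_ideal_span_X_image

lemma var_prime (W : Set (Fin m × Fin n)) : (varIdeal K W).IsPrime := by
  classical
  let ψ : MvPolynomial (Fin m × Fin n) K →ₐ[K] MvPolynomial (Fin m × Fin n) K :=
    aeval fun p => if p ∈ W then 0 else X p
  have h1 : ∀ f, f - ψ f ∈ varIdeal K W := by
    intro f
    rw [← Ideal.Quotient.eq]
    have : (Ideal.Quotient.mkₐ K (varIdeal K W)) =
        (Ideal.Quotient.mkₐ K (varIdeal K W)).comp ψ := by
      apply MvPolynomial.algHom_ext
      intro p
      simp only [AlgHom.comp_apply, ψ, aeval_X]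
      split_ifs with hp
      · rw [map_zero]
        exact Ideal.Quotient.eq_zero_iff_mem.2 (Ideal.subset_span ⟨p, hp, rfl⟩)
      · rfl
    exact DFunLike.congr_fun this f
  have h2 : varIdeal K W = RingHom.ker ψ := by
    apply le_antisymm
    · unfold varIdeal
      rw [Ideal.span_le]
      rintro _ ⟨p, hp, rfl⟩
      change ψ (X p) = 0
      simp [ψ, hp]
    · intro f hf
      have hf' : ψ f = 0 := hf
      have := h1 f
      rwa [hf', sub_zero] at this
  rw [h2]
  exact RingHom.ker_isPrime _

lemma PW_WS (hC : ∀ δ ∈ C, δ.a1 = 0 ∧ δ.b1 = 0) (A : Set (Fin m)) (B : Set (Fin n)) :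
    PW K C (WS A B) = varIdeal K (WS A B) := by
  have : minorsAvoiding C (WS A B) = ∅ := by
    ext δ
    simp only [minorsAvoiding, Set.mem_ofPred_eq, Set.mem_empty_iff_false, iff_false, not_and]
    intro hδ h
    have : ((0, 0) : Fin m × Fin n) ∈ δ.vertexSet ∩ WS A B := by
      refine ⟨?_, Or.inl rfl⟩
      simp [Minor2.vertexSet, (hC δ hδ).1, (hC δ hδ).2]
    rw [h] at this
    exact this
  unfold PW
  rw [this, toric_empty]
  exact sup_bot_eq _

lemma X_mem_var {W : Set (Fin m × Fin n)} {p : Fin m × Fin n} :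
    (X p : MvPolynomial (Fin m × Fin n) K) ∈ varIdeal K W ↔ p ∈ W := by
  constructor
  · intro h
    rw [mem_var] at h
    obtain ⟨q, hq, h⟩ := h (Finsupp.single p 1) (by simp [support_X])
    have : p = q := by
      by_contra hne
      simp [hne] at h
    rwa [this]
  · intro h
    exact Ideal.subset_span ⟨p, h, rfl⟩

lemma minor_le_var (hC : ∀ δ ∈ C, δ.a1 = 0 ∧ δ.b1 = 0) {A : Set (Fin m)} {B : Set (Fin n)}
    (hcov : IsCov C A B) : minorIdeal K C ≤ varIdeal K (WS A B) := by
  unfold minorIdeal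
  rw [Ideal.span_le]
  rintro f ⟨δ, hδ, rfl⟩
  rw [binom_eq hC hδ]
  refine Ideal.sub_mem _ (Ideal.mul_mem_right _ _ (X_mem_var.2 (Or.inl rfl))) ?_
  rcases hcov _ ⟨δ, hδ, rfl⟩ with h | h
  · exact Ideal.mul_mem_left _ _ (X_mem_var.2 (Or.inr (Or.inl ⟨rfl, h⟩)))
  · exact Ideal.mul_mem_right _ _ (X_mem_var.2 (Or.inr (Or.inr ⟨rfl, h⟩)))

lemma minCov_mem (hC : ∀ δ ∈ C, δ.a1 = 0 ∧ δ.b1 = 0) (hne : C.Nonempty) {A : Set (Fin m)}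
    {B : Set (Fin n)} (hcov : MinCov C A B) (hJ : ¬ toricIdeal K C ≤ varIdeal K (WS A B)) :
    Admissible C (WS A B) ∧ PW K C (WS A B) ∈ (minorIdeal K C).minimalPrimes := by
  obtain ⟨δ0, hδ0⟩ := hne
  refine ⟨⟨?_, ?_⟩, ?_⟩
  · rintro p (rfl | ⟨h1, h2⟩ | ⟨h1, h2⟩)
    · exact (edge_V hC ⟨δ0, hδ0, rfl⟩).2.1
    · obtain ⟨e, he, h3, -⟩ := hcov.rows _ h2
      have : p = (e.1, 0) := Prod.ext h3.symm h1
      rw [this]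
      exact (edge_V hC he).2.2.1
    · obtain ⟨e, he, h3, -⟩ := hcov.cols _ h2
      have : p = (0, e.2) := Prod.ext h1 h3.symm
      rw [this]
      exact (edge_V hC he).2.2.2
  · intro δ hδ
    right
    rcases hcov.cov _ ⟨δ, hδ, rfl⟩ with h | h
    · refine ⟨(0, 0), (δ.a2, 0), Or.inl rfl, Or.inr (Or.inl ⟨rfl, h⟩), Or.inl (Or.inl ?_)⟩
      rw [(hC δ hδ).1, (hC δ hδ).2]
    · refine ⟨(0, 0), (0, δ.b2), Or.inl rfl, Or.inr (Or.inr ⟨rfl, h⟩), Or.inr (Or.inl ?_)⟩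
      rw [(hC δ hδ).1, (hC δ hδ).2]
  · rw [PW_WS hC]
    refine ⟨⟨var_prime _, minor_le_var hC hcov.cov⟩, ?_⟩
    rintro Q ⟨hQ, hIQ⟩ hQP
    have ht : X (0, 0) ∈ Q := by
      by_contra ht
      exact hJ ((toric_le_prime hC hQ hIQ ht).trans hQP)
    have hedge : ∀ e, EdgeC C e → X (e.1, 0) ∈ Q ∨ X (0, e.2) ∈ Q := by
      rintro _ ⟨δ, hδ, rfl⟩
      have h1 : Minor2.binom K δ ∈ Q := hIQ (Ideal.subset_span ⟨δ, hδ, rfl⟩)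
      rw [binom_eq hC hδ] at h1
      have h2 : X (0, δ.b2) * X (δ.a2, 0) ∈ Q := by
        have h3 := Ideal.sub_mem _ (Ideal.mul_mem_right (X (δ.a2, δ.b2)) _ ht) h1
        rwa [sub_sub_cancel] at h3
      exact (hQ.mem_or_mem h2).symm
    unfold varIdeal
    rw [Ideal.span_le]
    rintro _ ⟨p, hp, rfl⟩
    rcases hp with rfl | ⟨h1, h2⟩ | ⟨h1, h2⟩
    · exact ht
    · obtain ⟨e, he, h3, h4⟩ := hcov.rows _ h2
      have : p = (e.1, 0) := Prod.ext h3.symm h1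
      rw [this]
      refine (hedge e he).resolve_right fun h => ?_
      rcases X_mem_var.1 (hQP h) with h5 | h5 | h5
      · exact (edge_ne hC he).2 (Prod.ext_iff.1 h5).2
      · exact (edge_ne hC he).2 h5.1
      · exact h4 h5.2
    · obtain ⟨e, he, h3, h4⟩ := hcov.cols _ h2
      have : p = (0, e.2) := Prod.ext h1 h3.symm
      rw [this]
      refine (hedge e he).resolve_left fun h => ?_
      rcases X_mem_var.1 (hQP h) with h5 | h5 | h5
      · exact (edge_ne hC he).1 (Prod.ext_iff.1 h5).1
      · exact h4 h5.2
      · exact (edge_ne hC he).1 h5.1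

lemma PW_empty : PW K C ∅ = toricIdeal K C := by
  have : minorsAvoiding C ∅ = C := by
    ext δ
    simp [minorsAvoiding]
  unfold PW varIdeal
  rw [this]
  simp

lemma empty_mem (hC : ∀ δ ∈ C, δ.a1 = 0 ∧ δ.b1 = 0) :
    Admissible C ∅ ∧ PW K C ∅ ∈ (minorIdeal K C).minimalPrimes := by
  refine ⟨⟨Set.empty_subset _, fun δ _ => Or.inl (Set.empty_inter _)⟩, ?_⟩
  rw [PW_empty]
  refine ⟨⟨toric_prime, minor_le_toric hC⟩, ?_⟩
  rintro Q ⟨hQ, hIQ⟩ hQP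
  exact toric_le_prime hC hQ hIQ fun h => X_not_mem_toric _ (hQP h)

/-- The coefficient sum over the class of `u`. -/
noncomputable def lu (K : Type*) [Field K] {m n : ℕ} (C : Set (Minor2 m n))
    (u : (Fin m × Fin n) →₀ ℕ) : MvPolynomial (Fin m × Fin n) K →ₗ[K] K :=
  Lf K (Set.indicator {v | Mc K C v = Mc K C u} 1)

lemma lu_minor (hC : ∀ δ ∈ C, δ.a1 = 0 ∧ δ.b1 = 0) (u : (Fin m × Fin n) →₀ ℕ)
    {f : MvPolynomial (Fin m × Fin n) K} (hf : f ∈ minorIdeal K C) : lu K C u f = 0 := by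
  classical
  refine Lf_minor hC _ (fun e he w => ?_) hf
  have : Mc K C (w + (ex (0, 0) + ex e)) = Mc K C (w + (ex (e.1, 0) + ex (0, e.2))) := by
    simp only [Mc_add, Mc_edge hC he]
  simp only [Set.indicator_apply, Set.mem_ofPred_eq, this, Pi.one_apply]

lemma lu_zero_of (u : (Fin m × Fin n) →₀ ℕ) {f : MvPolynomial (Fin m × Fin n) K}
    (hf : ∀ v ∈ f.support, Mc K C v ≠ Mc K C u) : lu K C u f = 0 := by
  unfold lu
  rw [Lf_apply]
  refine Finset.sum_eq_zero fun v hv => ?_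
  rw [Set.indicator_of_notMem, smul_zero]
  exact hf v hv

lemma sq_wt {A : Set (Fin m)} {B : Set (Fin n)} {f : MvPolynomial (Fin m × Fin n) K}
    (hf : f ∈ varIdeal K (WS A B) ^ 2) : ∀ v ∈ f.support, 2 ≤ wt C A B v := by
  classical
  rw [pow_two] at hf
  induction hf using Submodule.mul_induction_on' with
  | mem_mul_mem a ha b hb =>
    intro v hv
    obtain ⟨x, hx, y, hy, rfl⟩ := Finset.mem_add.1 (support_mul a b hv)
    obtain ⟨p, hp, hxp⟩ := (mem_var _ _).1 ha x hx
    obtain ⟨q, hq, hyq⟩ := (mem_var _ _).1 hb y hy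
    have h1 := le_wt (C := C) (A := A) (B := B) hxp
    have h2 := le_wt (C := C) (A := A) (B := B) hyq
    rw [wv_WS hp] at h1
    rw [wv_WS hq] at h2
    rw [wt_add]
    omega
  | add x _ y _ hx hy =>
    intro v hv
    rcases Finset.mem_union.1 (support_add hv) with h | h
    · exact hx v h
    · exact hy v h

lemma lu_of_sq (hC : ∀ δ ∈ C, δ.a1 = 0 ∧ δ.b1 = 0) {A : Set (Fin m)} {B : Set (Fin n)}
    (hcov : IsCov C A B) {u : (Fin m × Fin n) →₀ ℕ} (hu : wt C A B u ≤ 1)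
    {f : MvPolynomial (Fin m × Fin n) K}
    (hf : f ∈ minorIdeal K C + varIdeal K (WS A B) ^ 2) : lu K C u f = 0 := by
  obtain ⟨g, hg, h, hh, rfl⟩ := Submodule.mem_sup.1 hf
  rw [map_add, lu_minor hC u hg, zero_add]
  refine lu_zero_of u fun v hv hvu => ?_
  have h1 := sq_wt (C := C) hh v hv
  rw [wt_Mc hC hcov hvu] at h1
  omega

lemma sum_classes {N : Type*} [AddCommGroup N] [Module K N]
    (A : ((Fin m × Fin n) →₀ ℕ) → N) (hA : ∀ u v, Mc K C u = Mc K C v → A u = A v)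
    {f : MvPolynomial (Fin m × Fin n) K} (hf : ∀ u, A u ≠ 0 → lu K C u f = 0) :
    Lf K A f = 0 := by
  classical
  rw [Lf_apply, ← Finset.sum_fiberwise_of_maps_to (t := f.support.image (Mc K C))
    (g := Mc K C) (fun v hv => Finset.mem_image_of_mem _ hv)]
  refine Finset.sum_eq_zero fun q hq => ?_
  obtain ⟨u, hu, rfl⟩ := Finset.mem_image.1 hq
  by_cases h0 : A u = 0
  · refine Finset.sum_eq_zero fun v hv => ?_
    rw [hA v u (Finset.mem_filter.1 hv).2, h0, smul_zero]
  · have h1 := hf u h0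
    have h2 : ∑ v ∈ f.support with Mc K C v = Mc K C u, coeff v f • A v =
        (∑ v ∈ f.support with Mc K C v = Mc K C u, coeff v f) • A u := by
      rw [Finset.sum_smul]
      exact Finset.sum_congr rfl fun v hv => by rw [hA v u (Finset.mem_filter.1 hv).2]
    rw [h2]
    have h3 : ∑ v ∈ f.support with Mc K C v = Mc K C u, coeff v f = lu K C u f := by
      unfold lu
      rw [Lf_apply, Finset.sum_filter]
      refine Finset.sum_congr rfl fun v _ => ?_
      simp [Set.indicator_apply]
    rw [h3, h1, zero_smul]

lemma mem_minor_of_lu {f : MvPolynomial (Fin m × Fin n) K} (hf : ∀ u, lu K C u f = 0) :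
    f ∈ minorIdeal K C := by
  have h := sum_classes (Mc K C) (fun u v h => h) (f := f) (fun u _ => hf u)
  rw [← Ideal.Quotient.eq_zero_iff_mem, ← h, Lf_apply]
  conv_lhs => rw [f.as_sum]
  rw [map_sum]
  refine Finset.sum_congr rfl fun v _ => ?_
  have h2 : (monomial v (coeff v f) : MvPolynomial (Fin m × Fin n) K) =
    coeff v f • monomial v 1 := by rw [smul_monomial]; simp
  rw [h2]
  rfl

/-- Existence of a minimal cover of weight zero. -/
lemma exists_wt_zero (hC : ∀ δ ∈ C, δ.a1 = 0 ∧ δ.b1 = 0) (u : (Fin m × Fin n) →₀ ℕ)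
    (hno : ∀ z, Mc K C (ex (0, 0) + u) ≠ Mc K C (ex (0, 0) + (ex (0, 0) + z))) :
    ∃ A B, MinCov C A B ∧ wt C A B u = 0 := by
  let good : Set (Set (Fin m)) := {T | (∀ k, k ≠ 0 → u (k, 0) ≠ 0 → k ∈ T) ∧
    ∀ k ∈ T, k ≠ 0 ∧ ∃ z, Mc K C (ex (0, 0) + u) = Mc K C (ex (0, 0) + (ex (k, 0) + z)) ∧
      (∀ l, l ≠ 0 → z (0, l) = u (0, l)) ∧ ∀ e, EdgeC C e → e.1 ∉ T → u e ≤ z e}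
  have hT0 : {k | k ≠ 0 ∧ u (k, 0) ≠ 0} ∈ good := by
    refine ⟨fun k h1 h2 => ⟨h1, h2⟩, ?_⟩
    rintro k ⟨h1, h2⟩
    refine ⟨h1, ?_⟩
    obtain ⟨z, hz⟩ := split1 h2
    refine ⟨z, by rw [← hz], ?_, ?_⟩
    · intro l hl
      rw [hz]
      have : ((k, 0) : Fin m × Fin n) ≠ (0, l) := fun h => h1 (Prod.ext_iff.1 h).1
      simp [ex, Finsupp.single_apply, this]
    · intro e he _
      have : ((k, 0) : Fin m × Fin n) ≠ e := by
        rintro rfl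
        exact (edge_ne hC he).2 rfl
      rw [hz]
      simp [ex, Finsupp.single_apply, this]
  obtain ⟨T, -, hmax⟩ := (Set.toFinite good).exists_le_maximal hT0
  obtain ⟨⟨htok, hT⟩, hmax⟩ := hmax
  have hcov : IsCov C {i | i ∉ T} {l | ∃ k ∈ T, EdgeC C (k, l)} := by
    intro e he
    by_cases h : e.1 ∈ T
    · exact Or.inr ⟨e.1, h, he⟩
    · exact Or.inl h
  obtain ⟨A, B, hA, hB, hmin⟩ := exists_minCov hcov
  refine ⟨A, B, hmin, wt_eq_zero fun p hp => ?_⟩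
  have h1 : p ∉ WS A B := by
    rintro (rfl | ⟨h1, h2⟩ | ⟨h1, h2⟩)
    · obtain ⟨z, hz⟩ := split1 hp
      exact hno z (by rw [← hz])
    · obtain ⟨e, he, h3, -⟩ := hmin.rows _ h2
      refine hA h2 (htok p.1 (by rw [← h3]; exact (edge_ne hC he).1) ?_)
      rw [← h1]
      exact hp
    · obtain ⟨k, hk, hkl⟩ := hB h2
      obtain ⟨-, z, hz, hzb, -⟩ := hT k hk
      have hp' : p = (0, p.2) := Prod.ext h1 rfl
      have : z (0, p.2) ≠ 0 := by
        rw [hzb _ (edge_ne hC hkl).2, ← hp']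
        exact hp
      obtain ⟨z1, rfl⟩ := split1 this
      refine hno (ex (k, p.2) + z1) ?_
      rw [hz]
      have := Mc_edge (K := K) hC hkl
      simp only [Mc_add] at this ⊢
      linear_combination (-Mc K C (ex (0, 0)) * Mc K C z1) * this
  have h2 : ¬ (EdgeC C p ∧ p.1 ∈ A ∧ p.2 ∈ B) := by
    rintro ⟨hpe, hpA, hpB⟩
    obtain ⟨k, hk, hkl⟩ := hB hpB
    have hpT : p.1 ∉ T := hA hpA
    obtain ⟨hk0, z, hz, hzb, hzc⟩ := hT k hk
    have hgood : insert p.1 T ∈ good := by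
      refine ⟨fun k h1 h2 => Or.inr (htok k h1 h2), ?_⟩
      rintro k' (rfl | hk')
      · refine ⟨(edge_ne hC hpe).1, ?_⟩
        have hzp : z p ≠ 0 := by
          have := hzc p hpe hpT
          omega
        obtain ⟨z1, rfl⟩ := split1 hzp
        refine ⟨ex (k, p.2) + z1, ?_, ?_, ?_⟩
        · rw [hz]
          have e1 := Mc_edge (K := K) hC hpe
          have e2 := Mc_edge (K := K) hC hkl
          simp only [Mc_add] at e1 e2 ⊢
          linear_combination (Mc K C (ex (k, 0)) * Mc K C z1) * e1 -
            (Mc K C (ex (p.1, 0)) * Mc K C z1) * e2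
        · intro l hl
          rw [← hzb l hl]
          have h3 : p ≠ (0, l) := fun h => (edge_ne hC hpe).1 (Prod.ext_iff.1 h).1
          have h4 : ((k, p.2) : Fin m × Fin n) ≠ (0, l) := fun h => hk0 (Prod.ext_iff.1 h).1
          simp [ex, Finsupp.single_apply, h3, h4]
        · intro e he heT
          have h5 := hzc e he (fun h => heT (Or.inr h))
          have h3 : p ≠ e := by
            rintro rfl
            exact heT (Or.inl rfl)
          have h6 : (ex p + z1) e = z1 e := by
            simp [ex, Finsupp.single_apply, h3]
          rw [h6] at h5
          rw [Finsupp.add_apply]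
          omega
      · obtain ⟨h3, z', h4, h5, h6⟩ := hT k' hk'
        exact ⟨h3, z', h4, h5, fun e he h => h6 e he (fun h' => h (Or.inr h'))⟩
    exact hpT (hmax hgood (Set.subset_insert _ _) (Or.inl rfl))
  simp [wv, h1, h2]

/-- If `J ⊆ P_W` then the fibre of a monomial `x₀₀ u` of weight one is a single class. -/
lemma fiber_single (hC : ∀ δ ∈ C, δ.a1 = 0 ∧ δ.b1 = 0) {A : Set (Fin m)} {B : Set (Fin n)}
    (hcov : MinCov C A B) (hJ : toricIdeal K C ≤ varIdeal K (WS A B))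
    {u v : (Fin m × Fin n) →₀ ℕ} (hu : wt C A B u = 0) (hD : Dg C v = Dg C (ex (0, 0) + u)) :
    Mc K C v = Mc K C (ex (0, 0) + u) := by
  have inter : ∀ x y : (Fin m × Fin n) →₀ ℕ, Dg C x = Dg C y → x ≠ y →
      ∃ p ∈ WS A B, x p ≠ 0 := by
    intro x y h hne
    refine (mem_var _ _).1 (hJ (mem_toric_of_Dg h)) x ?_
    rw [mem_support_iff, coeff_sub, coeff_monomial, coeff_monomial]
    simp [Ne.symm hne]
  have eqz : ∀ x y : (Fin m × Fin n) →₀ ℕ, Dg C x = Dg C y → wt C A B x = 0 → x = y := by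
    intro x y h h0
    by_contra hne
    obtain ⟨p, hp, hxp⟩ := inter x y h hne
    have := le_wt (C := C) (A := A) (B := B) hxp
    rw [wv_WS hp] at this
    omega
  by_cases hvu : v = ex (0, 0) + u
  · rw [hvu]
  have hwv : wt C A B v = 1 := by
    rw [wt_Dg K hC hcov.cov hD, wt_add, wt_ex, hu, wv_WS (Or.inl rfl)]
  obtain ⟨p, hp, hvp⟩ := inter v _ hD hvu
  obtain ⟨v', rfl⟩ := split1 hvp
  rcases hp with rfl | ⟨h1, h2⟩ | ⟨h1, h2⟩
  · rw [Dg_add, Dg_add] at hD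
    have := eqz u v' (add_left_cancel hD).symm hu
    rw [this]
  · obtain ⟨e, he, h3, h4⟩ := hcov.rows _ h2
    have hne := edge_ne hC he
    have hp : p = (e.1, 0) := Prod.ext h3.symm h1
    subst hp
    have hmv := Dg_move hC he
    have hD2 : Dg C (ex (0, e.2) + u) = Dg C (ex e + v') := by
      simp only [Dg_add] at hD hmv ⊢
      apply add_left_cancel (a := Dg C (ex (0, 0)))
      rw [← add_assoc _ (Dg C (ex e)), hmv, add_right_comm, hD]
      abel
    have hw : wt C A B (ex (0, e.2) + u) = 0 := by
      rw [wt_add, wt_ex, hu]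
      have h5 : ((0, e.2) : Fin m × Fin n) ∉ WS A B := by
        simp [WS, hne.2, h4]
      simp [wv, h5, h4]
    have hq := eqz _ _ hD2 hw
    have hb : v' (0, e.2) ≠ 0 := by
      have h6 := ex_pos (0, e.2) u
      rw [hq] at h6
      have : e ≠ (0, e.2) := fun h => hne.1 (Prod.ext_iff.1 h).1
      simpa [ex, Finsupp.single_apply, this] using h6
    obtain ⟨w, rfl⟩ := split1 hb
    have hu' : u = ex e + w := by
      apply add_left_cancel (a := ex (0, e.2))
      rw [hq]
      abel
    have := Mc_edge (K := K) hC he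
    rw [hu']
    simp only [Mc_add] at this ⊢
    linear_combination (-Mc K C w) * this
  · obtain ⟨e, he, h3, h4⟩ := hcov.cols _ h2
    have hne := edge_ne hC he
    have hp : p = (0, e.2) := Prod.ext h1 h3.symm
    subst hp
    have hmv := Dg_move hC he
    have hD2 : Dg C (ex (e.1, 0) + u) = Dg C (ex e + v') := by
      simp only [Dg_add] at hD hmv ⊢
      apply add_left_cancel (a := Dg C (ex (0, 0)))
      rw [← add_assoc _ (Dg C (ex e)), hmv, add_assoc, hD]
      abel
    have hw : wt C A B (ex (e.1, 0) + u) = 0 := by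
      rw [wt_add, wt_ex, hu]
      have h5 : ((e.1, 0) : Fin m × Fin n) ∉ WS A B := by
        simp [WS, hne.1, h4]
      simp [wv, h5, h4]
    have hq := eqz _ _ hD2 hw
    have hb : v' (e.1, 0) ≠ 0 := by
      have h6 := ex_pos (e.1, 0) u
      rw [hq] at h6
      have : e ≠ (e.1, 0) := fun h => hne.2 (Prod.ext_iff.1 h).2
      simpa [ex, Finsupp.single_apply, this] using h6
    obtain ⟨w, rfl⟩ := split1 hb
    have hu' : u = ex e + w := by
      apply add_left_cancel (a := ex (e.1, 0))
      rw [hq]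
      abel
    have := Mc_edge (K := K) hC he
    rw [hu']
    simp only [Mc_add] at this ⊢
    linear_combination (-Mc K C w) * this

lemma lu_congr {u v : (Fin m × Fin n) →₀ ℕ} (h : Mc K C u = Mc K C v) :
    lu K C u = lu K C v := by
  unfold lu
  rw [h]

/-- The fibre functional vanishes on the toric ideal. -/
lemma fib_toric (u : (Fin m × Fin n) →₀ ℕ) {f : MvPolynomial (Fin m × Fin n) K}
    (hf : f ∈ toricIdeal K C) : Lf K (Set.indicator {v | Dg C v = Dg C u} (1 : ((Fin m × Fin n) →₀ ℕ) → K)) f = 0 := by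
  classical
  refine Lf_toric _ (fun x y h => ?_) hf
  simp only [Set.indicator_apply, Set.mem_ofPred_eq, h, Pi.one_apply]

/-- The main inclusion. -/
lemma main_incl (hC : ∀ δ ∈ C, δ.a1 = 0 ∧ δ.b1 = 0) {f : MvPolynomial (Fin m × Fin n) K}
    (hJ : f ∈ toricIdeal K C)
    (h1 : ∀ A B, MinCov C A B → ¬ toricIdeal K C ≤ varIdeal K (WS A B) →
      f ∈ varIdeal K (WS A B))
    (h2 : ∀ A B, MinCov C A B → ¬ toricIdeal K C ≤ varIdeal K (WS A B) →
      f ∈ minorIdeal K C + varIdeal K (WS A B) ^ 2) : f ∈ minorIdeal K C := by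
  classical
  have hvar : ∀ A B, MinCov C A B → f ∈ varIdeal K (WS A B) := by
    intro A B h
    by_cases hle : toricIdeal K C ≤ varIdeal K (WS A B)
    · exact hle hJ
    · exact h1 A B h hle
  -- classes without a monomial divisible by `x₀₀²`
  have caseA : ∀ u : (Fin m × Fin n) →₀ ℕ,
      (∀ z, Mc K C u ≠ Mc K C (ex (0, 0) + (ex (0, 0) + z))) → lu K C u f = 0 := by
    intro u hno
    by_cases hmv : ∃ u', Mc K C u = Mc K C (ex (0, 0) + u')
    · obtain ⟨u', hu'⟩ := hmv
      rw [lu_congr hu']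
      rw [hu'] at hno
      obtain ⟨A, B, hcov, hw⟩ := exists_wt_zero hC u' hno
      by_cases hle : toricIdeal K C ≤ varIdeal K (WS A B)
      · have hset : {v | Mc K C v = Mc K C (ex (0, 0) + u')}
            = {v | Dg C v = Dg C (ex (0, 0) + u')} := by
          ext v
          exact ⟨fun h => Dg_of_Mc hC h, fun h => fiber_single hC hcov hle hw h⟩
        unfold lu
        rw [hset]
        exact fib_toric _ hJ
      · refine lu_of_sq hC hcov.cov ?_ (h2 A B hcov hle)
        rw [wt_add, wt_ex, wv_WS (Or.inl rfl), hw]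
    · push Not at hmv
      have ht : u (0, 0) = 0 := by
        by_contra h
        obtain ⟨z, hz⟩ := split1 h
        exact hmv z (by rw [← hz])
      have hab : ∀ e, EdgeC C e → ¬ (u (e.1, 0) ≠ 0 ∧ u (0, e.2) ≠ 0) := by
        rintro e he ⟨ha, hb⟩
        obtain ⟨z, rfl⟩ := split2 ha hb
          (fun h => (edge_ne hC he).1 (Prod.ext_iff.1 h).1)
        refine hmv (ex e + z) ?_
        have := Mc_edge (K := K) hC he
        simp only [Mc_add] at this ⊢
        linear_combination (-Mc K C z) * this
      have hcov : IsCov C {i | u (i, 0) = 0} {j | u (0, j) = 0} := by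
        intro e he
        have := hab e he
        simp only [Set.mem_ofPred_eq]
        tauto
      obtain ⟨A, B, hA, hB, hmin⟩ := exists_minCov hcov
      refine lu_zero_of u fun v hv hvu => ?_
      have hvu' : (v = u) = (u = u) := by
        refine Mc_inv (K := K) hC (fun x => x = u) (fun e he w => ?_) hvu
        refine propext ⟨fun h => ?_, fun h => ?_⟩
        · exfalso
          rw [← h] at ht
          simp [ex] at ht
        · exfalso
          refine hab e he ?_
          rw [← h]
          constructor <;> simp [ex]
      have hvu2 : v = u := hvu'.mpr rfl
      subst hvu2
      obtain ⟨p, hp, hvp⟩ := (mem_var _ _).1 (hvar A B hmin) v hv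
      rcases hp with rfl | ⟨h3, h4⟩ | ⟨h3, h4⟩
      · exact hvp ht
      · have h5 : v (p.1, 0) = 0 := hA h4
        rw [← h3] at h5
        exact hvp h5
      · have h5 : v (0, p.2) = 0 := hB h4
        rw [← h3] at h5
        exact hvp h5
  refine mem_minor_of_lu fun u => ?_
  by_cases hno : ∀ z, Mc K C u ≠ Mc K C (ex (0, 0) + (ex (0, 0) + z))
  · exact caseA u hno
  push Not at hno
  obtain ⟨z, hz⟩ := hno
  have hrest : Lf K (Set.indicator {v | Dg C v = Dg C u ∧ Mc K C v ≠ Mc K C u} (1 : ((Fin m × Fin n) →₀ ℕ) → K)) f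
      = 0 := by
    refine sum_classes (C := C) _ (fun x y h => ?_) (fun v hv => ?_)
    · simp only [Set.indicator_apply, Set.mem_ofPred_eq, h, Dg_of_Mc hC h, Pi.one_apply]
    · have hv' : Dg C v = Dg C u ∧ Mc K C v ≠ Mc K C u := by
        by_contra hcon
        exact hv (Set.indicator_of_notMem (s := {v | Dg C v = Dg C u ∧ Mc K C v ≠ Mc K C u}) (a := v) hcon _)
      refine caseA v fun z' hz' => hv'.2 ?_
      have h3 : Dg C z' = Dg C z := by
        have h4 := hv'.1
        rw [Dg_of_Mc hC hz', Dg_of_Mc hC hz] at h4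
        simp only [Dg_add] at h4
        exact add_left_cancel (add_left_cancel h4)
      have h5 := key2 (K := K) hC h3
      rw [hz, hz']
      simp only [Mc_add]
      rw [← mul_assoc, h5, mul_assoc]
  have hsum : Lf K (Set.indicator {v | Dg C v = Dg C u} (1 : ((Fin m × Fin n) →₀ ℕ) → K)) f =
      Lf K (Set.indicator {v | Dg C v = Dg C u ∧ Mc K C v ≠ Mc K C u} (1 : ((Fin m × Fin n) →₀ ℕ) → K)) f +
        lu K C u f := by
    unfold lu
    rw [Lf_apply, Lf_apply, Lf_apply, ← Finset.sum_add_distrib]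
    refine Finset.sum_congr rfl fun v _ => ?_
    rw [← smul_add]
    congr 1
    simp only [Set.indicator_apply, Set.mem_ofPred_eq, Pi.one_apply]
    by_cases h3 : Mc K C v = Mc K C u
    · simp [h3, Dg_of_Mc hC h3]
    · simp [h3]
  rw [fib_toric u hJ, hrest, zero_add] at hsum
  exact hsum.symm

end Aux

theorem statement13 (K : Type*) [Field K] (m n : ℕ) [NeZero m] [NeZero n]
    (C : Set (Minor2 m n)) (hC : ∀ δ ∈ C, δ.a1 = 0 ∧ δ.b1 = 0) :
    minorIdeal K C =
      (⨅ W ∈ {W : Set (Fin m × Fin n) |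
          Admissible C W ∧ PW K C W ∈ (minorIdeal K C).minimalPrimes},
        PW K C W) ⊓
      (⨅ W ∈ {W : Set (Fin m × Fin n) |
          (Admissible C W ∧ PW K C W ∈ (minorIdeal K C).minimalPrimes) ∧ W ≠ ∅},
        (minorIdeal K C + PW K C W ^ 2)) := by
  apply le_antisymm
  · refine le_inf ?_ ?_
    · refine le_iInf₂ fun W hW => ?_
      exact hW.2.1.2
    · exact le_iInf₂ fun W hW => le_sup_left
  · rintro f ⟨hf1, hf2⟩
    simp only [SetLike.mem_coe, Ideal.mem_iInf] at hf1 hf2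
    have hJ : f ∈ toricIdeal K C := by
      have := hf1 ∅ (empty_mem hC)
      rwa [PW_empty] at this
    by_cases hne : C.Nonempty
    · refine main_incl hC hJ (fun A B h hle => ?_) (fun A B h hle => ?_)
      · have := hf1 (WS A B) (minCov_mem hC hne h hle)
        rwa [PW_WS hC] at this
      · have := hf2 (WS A B) ⟨minCov_mem hC hne h hle, fun h0 => ?_⟩
        · rwa [PW_WS hC] at this
        · have h1 : ((0, 0) : Fin m × Fin n) ∈ WS A B := Or.inl rfl
          rw [h0] at h1
          exact h1
    · rw [Set.not_nonempty_iff_eq_empty] at hne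
      subst hne
      rw [toric_empty] at hJ
      rw [show f = 0 from hJ]
      exact Ideal.zero_mem _
end

section
/- Let C be an arbitrary set of corner minors of M, and let h₁ and v₁ be the vertices of G(C) corresponding to the maximal horizontal and vertical intervals of C containing x₁₁. Then for every cycle σ in G(C) passing through neither v₁ nor h₁, one has x₁₁² f_σ ∈ I(C). -/
open MvPolynomial

lemma nat_cycle {R : Type*} [CommRing R] (y : R) (A B P Q : ℕ → R)
    (hP : ∀ k, y * P k = A k * B k) (hQ : ∀ k, y * Q k = A (k + 1) * B k) (s : ℕ) :
    y ^ 2 * ∏ i ∈ Finset.range (s + 1), P i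
      = y * (A 0 * B s) * ∏ i ∈ Finset.range s, Q i := by
  induction s with
  | zero => simp only [zero_add, Finset.prod_range_one, Finset.prod_range_zero]
            linear_combination y * hP 0
  | succ s ih =>
    rw [Finset.prod_range_succ, Finset.prod_range_succ (fun i => Q i)]
    linear_combination P (s + 1) * ih +
      (A 0 * B s * ∏ i ∈ Finset.range s, Q i) * hP (s + 1) -
      (A 0 * B (s + 1) * ∏ i ∈ Finset.range s, Q i) * hQ s

lemma fin_cycle {R : Type*} [CommRing R] (l : ℕ) (y : R) (A B P Q : Fin (l + 2) → R)
    (hP : ∀ k, y * P k = A k * B k) (hQ : ∀ k, y * Q k = A (k + 1) * B k) :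
    y ^ 2 * ∏ i, P i = y ^ 2 * ∏ i, Q i := by
  have h := nat_cycle y (fun k => A (Fin.ofNat (l + 2) k)) (fun k => B (Fin.ofNat (l + 2) k))
    (fun k => P (Fin.ofNat (l + 2) k)) (fun k => Q (Fin.ofNat (l + 2) k))
    (fun k => hP _) (fun k => by
      have h1 : Fin.ofNat (l + 2) (k + 1) = Fin.ofNat (l + 2) k + 1 := by
        ext; simp [Fin.ofNat, Fin.val_add]
      simpa only [h1] using hQ (Fin.ofNat (l + 2) k)) (l + 1)
  have e : ∀ F : Fin (l + 2) → R,
      ∏ i, F i = ∏ i ∈ Finset.range (l + 2), F (Fin.ofNat (l + 2) i) := by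
    intro F
    rw [Finset.prod_range]
    refine Finset.prod_congr rfl fun i _ => congrArg F ?_
    ext; simp [Fin.ofNat, Nat.mod_eq_of_lt i.isLt]
  rw [e P, e Q, Finset.prod_range_succ (fun i => Q (Fin.ofNat (l + 2) i))]
  have h2 := hQ (Fin.ofNat (l + 2) (l + 1))
  have h3 : ((Fin.ofNat (l + 2) (l + 1)) + 1) = Fin.ofNat (l + 2) 0 := by
    ext; simp [Fin.ofNat, Fin.val_add]
  rw [h3] at h2
  linear_combination h - (y * ∏ i ∈ Finset.range (l + 1), Q (Fin.ofNat (l + 2) i)) * h2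

lemma col_eq {m n : ℕ} {C : Set (Minor2 m n)} {p q : Fin m × Fin n}
    (h : vClass C p = vClass C q) : p.2 = q.2 := by
  have hr : ∀ a b : Fin m × Fin n, vertAdj C a b → a.2 = b.2 := by
    rintro a b ⟨δ, -, h | h⟩
    all_goals
      have h1 : a ∈ ({a, b} : Set (Fin m × Fin n)) := by simp
      have h2 : b ∈ ({a, b} : Set (Fin m × Fin n)) := by simp
      rw [h] at h1 h2
      rcases h1 with rfl | rfl <;> rcases h2 with rfl | rfl <;> rfl
  exact congrArg (Quot.lift (fun p : Fin m × Fin n => p.2) hr) h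

lemma row_eq {m n : ℕ} {C : Set (Minor2 m n)} {p q : Fin m × Fin n}
    (h : hClass C p = hClass C q) : p.1 = q.1 := by
  have hr : ∀ a b : Fin m × Fin n, horizAdj C a b → a.1 = b.1 := by
    rintro a b ⟨δ, -, h | h⟩
    all_goals
      have h1 : a ∈ ({a, b} : Set (Fin m × Fin n)) := by simp
      have h2 : b ∈ ({a, b} : Set (Fin m × Fin n)) := by simp
      rw [h] at h1 h2
      rcases h1 with rfl | rfl <;> rcases h2 with rfl | rfl <;> rfl
  exact congrArg (Quot.lift (fun p : Fin m × Fin n => p.1) hr) h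

lemma vertex_rel (K : Type*) [Field K] {m n : ℕ} [NeZero m] [NeZero n]
    (C : Set (Minor2 m n)) (hC : ∀ δ ∈ C, δ.a1 = 0 ∧ δ.b1 = 0)
    (p : Fin m × Fin n) (hp : p ∈ vertexSetOf C)
    (hv : vClass C p ≠ vClass C ((0 : Fin m), (0 : Fin n)))
    (hh : hClass C p ≠ hClass C ((0 : Fin m), (0 : Fin n))) :
    X ((0 : Fin m), (0 : Fin n)) * X p - X (p.1, 0) * X (0, p.2) ∈ minorIdeal K C := by
  simp only [vertexSetOf, Set.mem_iUnion] at hp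
  obtain ⟨δ, hδ, hp⟩ := hp
  obtain ⟨h1, h2⟩ := hC δ hδ
  rcases hp with rfl | rfl | rfl | rfl
  · exact absurd (by rw [h1, h2]) hv
  · refine absurd (Eq.symm (Quot.sound ⟨δ, hδ, Or.inl ?_⟩)) hh
    rw [h1, h2]
  · refine absurd (Eq.symm (Quot.sound ⟨δ, hδ, Or.inl ?_⟩)) hv
    rw [h1, h2]
  · refine Ideal.subset_span ⟨δ, hδ, ?_⟩
    rw [Minor2.binom, h1, h2]
    ring

theorem statement14 (K : Type*) [Field K] (m n : ℕ) [NeZero m] [NeZero n]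
    (C : Set (Minor2 m n)) (hC : ∀ δ ∈ C, δ.a1 = 0 ∧ δ.b1 = 0)
    (σ : CycleIn C)
    (hv : ∀ k, vClass C (σ.p k) ≠ vClass C ((0 : Fin m), (0 : Fin n)))
    (hh : ∀ k, hClass C (σ.p k) ≠ hClass C ((0 : Fin m), (0 : Fin n))) :
    X ((0 : Fin m), (0 : Fin n)) ^ 2 * cycleBinom K σ ∈ minorIdeal K C := by
  have key := fin_cycle σ.len
    (Ideal.Quotient.mk (minorIdeal K C) (X ((0 : Fin m), (0 : Fin n))))
    (fun k => Ideal.Quotient.mk (minorIdeal K C) (X ((σ.p k).1, 0)))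
    (fun k => Ideal.Quotient.mk (minorIdeal K C) (X (0, (σ.p k).2)))
    (fun k => Ideal.Quotient.mk (minorIdeal K C) (X (σ.p k)))
    (fun k => Ideal.Quotient.mk (minorIdeal K C) (X (σ.q k)))
    (fun k => by
      rw [← map_mul, ← map_mul, Ideal.Quotient.eq]
      exact vertex_rel K C hC _ (σ.p_mem k) (hv k) (hh k))
    (fun k => by
      rw [← map_mul, ← map_mul, Ideal.Quotient.eq]
      have := vertex_rel K C hC _ (σ.q_mem k) (σ.shareV k ▸ hv k)
        ((σ.shareH k).symm ▸ hh (k + 1))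
      rwa [row_eq (σ.shareH k), ← col_eq (σ.shareV k)] at this)
  rw [← map_prod, ← map_prod, ← map_pow, ← map_mul, ← map_mul, Ideal.Quotient.eq,
    ← mul_sub] at key
  exact key
end

section
/- Let m, n > 2 and let C be the set of all corner minors of M, so that I(C) = (x₁₁x_{ij} − x_{1j}x_{i1} : 2 ≤ i ≤ m, 2 ≤ j ≤ n) ⊆ S. Then I₂(M) ∩ H ∩ V = I(C) + x₁₁·I₂(M_{2,2}), where H and V are the ideals generated by the first-row and first-column variables, respectively. -/
open MvPolynomial

/-- The Hilbert function `i ↦ dim_K (S/I)_i` of the quotient by a (homogeneous) ideal `I`,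
for the standard grading by total degree. -/
noncomputable def hilbFun (K : Type*) [Field K] {m n : ℕ}
    (I : Ideal (MvPolynomial (Fin m × Fin n) K)) (i : ℕ) : ℕ :=
  Module.finrank K (homogeneousSubmodule (Fin m × Fin n) K i) -
    Module.finrank K
      (Submodule.restrictScalars K I ⊓ homogeneousSubmodule (Fin m × Fin n) K i :
        Submodule K (MvPolynomial (Fin m × Fin n) K))

/-- `P` is the Hilbert–Poincaré polynomial of `S/I`:  the Hilbert series of `S/I` equals
`P(z)/(1-z)^d` where `d` is the Krull dimension of `S/I`. -/
noncomputable def IsHilbNum (K : Type*) [Field K] {m n : ℕ}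
    (I : Ideal (MvPolynomial (Fin m × Fin n) K)) (P : Polynomial ℤ) : Prop :=
  ∃ d : ℕ, ringKrullDim (MvPolynomial (Fin m × Fin n) K ⧸ I) = (d : WithBot ℕ∞) ∧
    (PowerSeries.mk fun i => (hilbFun K I i : ℤ)) * (1 - PowerSeries.X) ^ d =
      PowerSeries.mk fun i => P.coeff i

/-- `I(C)` for `C` the set of all corner-interval minors:
`(x_{a,1}x_{b,k} − x_{b,1}x_{a,k} : 1 ≤ a < b ≤ m, 2 ≤ k ≤ n)` (here `0`-indexed). -/
noncomputable def cornerIntervalIdealAll (K : Type*) [Field K] (m n : ℕ) [NeZero n] :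
    Ideal (MvPolynomial (Fin m × Fin n) K) :=
  Ideal.span {f | ∃ (a b : Fin m) (k : Fin n), a < b ∧ k ≠ 0 ∧
    f = X (a, (0 : Fin n)) * X (b, k) - X (b, (0 : Fin n)) * X (a, k)}

/-- The determinantal ideal `I₂(M)` generated by all 2-minors of `M`. -/
noncomputable def detIdeal2 (K : Type*) [Field K] (m n : ℕ) :
    Ideal (MvPolynomial (Fin m × Fin n) K) :=
  Ideal.span {f | ∃ (a b : Fin m) (c d : Fin n), a < b ∧ c < d ∧
    f = X (a, c) * X (b, d) - X (a, d) * X (b, c)}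

/-- The ideal `I₂(M_{t+1,1})` generated by all 2-minors of the submatrix with
(0-indexed) rows `≥ t`, viewed inside the full polynomial ring `S`. -/
noncomputable def detIdeal2From (K : Type*) [Field K] (m n : ℕ) (t : ℕ) :
    Ideal (MvPolynomial (Fin m × Fin n) K) :=
  Ideal.span {f | ∃ (a b : Fin m) (c d : Fin n), a < b ∧ c < d ∧ t ≤ a.val ∧
    f = X (a, c) * X (b, d) - X (a, d) * X (b, c)}

/-- The ideal `I₂(M_{2,2})` generated by the 2-minors not involving the first row
nor the first column, viewed inside the full polynomial ring `S`. -/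
noncomputable def detIdeal2_22 (K : Type*) [Field K] (m n : ℕ) [NeZero m] [NeZero n] :
    Ideal (MvPolynomial (Fin m × Fin n) K) :=
  Ideal.span {f | ∃ (a b : Fin m) (c d : Fin n), a < b ∧ c < d ∧ a ≠ 0 ∧ c ≠ 0 ∧
    f = X (a, c) * X (b, d) - X (a, d) * X (b, c)}

/-- `I(C)` for `C` the set of all corner minors:
`(x₁₁x_{ij} − x_{1j}x_{i1} : 2 ≤ i ≤ m, 2 ≤ j ≤ n)` (here `0`-indexed). -/
noncomputable def cornerIdealAll (K : Type*) [Field K] (m n : ℕ) [NeZero m] [NeZero n] :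
    Ideal (MvPolynomial (Fin m × Fin n) K) :=
  Ideal.span {f | ∃ (i : Fin m) (j : Fin n), i ≠ 0 ∧ j ≠ 0 ∧
    f = X ((0 : Fin m), (0 : Fin n)) * X (i, j) - X ((0 : Fin m), j) * X (i, (0 : Fin n))}

/-- The ideal `H = (x₁₁, …, x_{1n})` generated by the variables of the first row. -/
noncomputable def rowIdeal (K : Type*) [Field K] (m n : ℕ) [NeZero m] :
    Ideal (MvPolynomial (Fin m × Fin n) K) :=
  Ideal.span {f | ∃ j : Fin n, f = X ((0 : Fin m), j)}

/-- The ideal `V = (x₁₁, x₂₁, …, x_{m1})` generated by the variables of the first column. -/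
noncomputable def colIdeal (K : Type*) [Field K] (m n : ℕ) [NeZero n] :
    Ideal (MvPolynomial (Fin m × Fin n) K) :=
  Ideal.span {f | ∃ i : Fin m, f = X (i, (0 : Fin n))}

section Aux

lemma fin_ne_zero_of_lt {k : ℕ} [NeZero k] {a b : Fin k} (h : a < b) : b ≠ 0 := by
  rintro rfl
  simp [Fin.lt_def] at h

lemma fin_pos_of_ne_zero {k : ℕ} [NeZero k] {a : Fin k} (h : a ≠ 0) : 0 < a := by
  rw [Fin.lt_def, Fin.val_zero]
  exact Nat.pos_of_ne_zero fun h' => h (Fin.ext (by simpa using h'))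

variable {K : Type*} [Field K] {m n : ℕ} [NeZero m] [NeZero n]

/-- exponents of monomials lying in `H ∩ V` -/
def goodExp (s : (Fin m × Fin n) →₀ ℕ) : Prop :=
  (∃ j : Fin n, s ((0 : Fin m), j) ≠ 0) ∧ (∃ i : Fin m, s (i, (0 : Fin n)) ≠ 0)

open Classical in
/-- projection to the span of the monomials in `H ∩ V` -/
noncomputable def projGood (K : Type*) [Field K] (m n : ℕ) [NeZero m] [NeZero n] :
    MvPolynomial (Fin m × Fin n) K →ₗ[K] MvPolynomial (Fin m × Fin n) K :=
  (basisMonomials (Fin m × Fin n) K).constr K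
    (fun s => if goodExp s then monomial s (1 : K) else 0)

open Classical in
lemma projGood_monomial (s : (Fin m × Fin n) →₀ ℕ) (c : K) :
    projGood K m n (monomial s c) = if goodExp s then monomial s c else 0 := by
  have h : (monomial s c : MvPolynomial (Fin m × Fin n) K)
      = c • basisMonomials (Fin m × Fin n) K s := by
    simp [smul_monomial]
  rw [h, map_smul, projGood, Module.Basis.constr_basis]
  split_ifs <;> simp

lemma projGood_eq_self (f : MvPolynomial (Fin m × Fin n) K)
    (hf : ∀ s ∈ f.support, goodExp s) : projGood K m n f = f := by
  conv_lhs => rw [f.as_sum]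
  conv_rhs => rw [f.as_sum]
  rw [map_sum]
  refine Finset.sum_congr rfl fun s hs => ?_
  rw [projGood_monomial, if_pos (hf s hs)]

lemma mem_row_iff (f : MvPolynomial (Fin m × Fin n) K) :
    f ∈ rowIdeal K m n ↔ ∀ s ∈ f.support, ∃ j : Fin n, s ((0 : Fin m), j) ≠ 0 := by
  have h : {f : MvPolynomial (Fin m × Fin n) K | ∃ j : Fin n, f = X ((0 : Fin m), j)}
      = X '' {p : Fin m × Fin n | p.1 = 0} := by
    ext f
    constructor
    · rintro ⟨j, rfl⟩
      exact ⟨(0, j), rfl, rfl⟩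
    · rintro ⟨⟨a, j⟩, rfl, rfl⟩
      exact ⟨j, rfl⟩
  rw [rowIdeal, h, mem_ideal_span_X_image]
  simp [Prod.exists]

lemma mem_col_iff (f : MvPolynomial (Fin m × Fin n) K) :
    f ∈ colIdeal K m n ↔ ∀ s ∈ f.support, ∃ i : Fin m, s (i, (0 : Fin n)) ≠ 0 := by
  have h : {f : MvPolynomial (Fin m × Fin n) K | ∃ i : Fin m, f = X (i, (0 : Fin n))}
      = X '' {p : Fin m × Fin n | p.2 = 0} := by
    ext f
    constructor
    · rintro ⟨j, rfl⟩
      exact ⟨(j, 0), rfl, rfl⟩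
    · rintro ⟨⟨a, j⟩, rfl, rfl⟩
      exact ⟨a, rfl⟩
  rw [colIdeal, h, mem_ideal_span_X_image]
  simp [Prod.exists]

lemma goodExp_add (s : (Fin m × Fin n) →₀ ℕ) (a b : Fin m) (c d : Fin n) :
    goodExp (s + Finsupp.single (a, c) 1 + Finsupp.single (b, d) 1) ↔
      ((∃ j : Fin n, s ((0 : Fin m), j) ≠ 0) ∨ a = 0 ∨ b = 0) ∧
      ((∃ i : Fin m, s (i, (0 : Fin n)) ≠ 0) ∨ c = 0 ∨ d = 0) := by
  classical
  unfold goodExp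
  refine and_congr ?_ ?_
  · constructor
    · rintro ⟨j, hj⟩
      by_contra hcon
      push Not at hcon
      obtain ⟨h1, h2, h3⟩ := hcon
      apply hj
      simp [h1 j, h2, h3, Finsupp.single_apply]
    · rintro (⟨j, hj⟩ | rfl | rfl)
      · exact ⟨j, by simp [hj]⟩
      · exact ⟨c, by simp⟩
      · exact ⟨d, by simp⟩
  · constructor
    · rintro ⟨j, hj⟩
      by_contra hcon
      push Not at hcon
      obtain ⟨h1, h2, h3⟩ := hcon
      apply hj
      simp [h1 j, h2, h3, Finsupp.single_apply]
    · rintro (⟨j, hj⟩ | rfl | rfl)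
      · exact ⟨j, by simp [hj]⟩
      · exact ⟨a, by simp⟩
      · exact ⟨b, by simp⟩

lemma monomial_dvd (s : (Fin m × Fin n) →₀ ℕ) (k : K) (p : Fin m × Fin n) (h : s p ≠ 0) :
    ∃ t : (Fin m × Fin n) →₀ ℕ, s = t + Finsupp.single p 1 ∧
      (monomial s k : MvPolynomial (Fin m × Fin n) K) = monomial t k * X p := by
  classical
  have h1 : s = (s - Finsupp.single p 1) + Finsupp.single p 1 := by
    ext q
    by_cases hq : p = q
    · subst hq
      simp; omega
    · simp [Finsupp.single_apply, hq]
  refine ⟨s - Finsupp.single p 1, h1, ?_⟩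
  conv_lhs => rw [h1]
  rw [X, monomial_mul, mul_one]

/-- the right-hand side -/
noncomputable def rhsIdeal (K : Type*) [Field K] (m n : ℕ) [NeZero m] [NeZero n] :
    Ideal (MvPolynomial (Fin m × Fin n) K) :=
  cornerIdealAll K m n +
        Ideal.span {(X ((0 : Fin m), (0 : Fin n)) : MvPolynomial (Fin m × Fin n) K)} *
          detIdeal2_22 K m n

lemma corner_mem {i : Fin m} {j : Fin n} (hi : i ≠ 0) (hj : j ≠ 0) :
    (X ((0 : Fin m), (0 : Fin n)) * X (i, j) - X ((0 : Fin m), j) * X (i, (0 : Fin n)) :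
      MvPolynomial (Fin m × Fin n) K) ∈ rhsIdeal K m n :=
  Ideal.mem_sup_left (Ideal.subset_span ⟨i, j, hi, hj, rfl⟩)

lemma inner_mem {a b : Fin m} {c d : Fin n} (hab : a < b) (ha : a ≠ 0) (hc : c ≠ 0)
    (hd : d ≠ 0) :
    (X ((0 : Fin m), (0 : Fin n)) * (X (a, c) * X (b, d) - X (a, d) * X (b, c)) :
      MvPolynomial (Fin m × Fin n) K) ∈ rhsIdeal K m n := by
  have key : ∀ {c d : Fin n}, c < d → c ≠ 0 →
      (X ((0 : Fin m), (0 : Fin n)) * (X (a, c) * X (b, d) - X (a, d) * X (b, c)) :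
      MvPolynomial (Fin m × Fin n) K) ∈ rhsIdeal K m n := by
    intro c d hcd hc
    exact Ideal.mem_sup_right (Ideal.mul_mem_mul (Ideal.mem_span_singleton_self _)
      (Ideal.subset_span ⟨a, b, c, d, hab, hcd, ha, hc, rfl⟩))
  rcases lt_trichotomy c d with h | h | h
  · exact key h hc
  · subst h; simp
  · have := neg_mem (key h hd)
    convert this using 1
    ring

lemma x_mul_minor_mem {a b : Fin m} {c d : Fin n} (hab : a < b) (hcd : c < d) :
    (X ((0 : Fin m), (0 : Fin n)) * (X (a, c) * X (b, d) - X (a, d) * X (b, c)) :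
      MvPolynomial (Fin m × Fin n) K) ∈ rhsIdeal K m n := by
  have hb : b ≠ 0 := fin_ne_zero_of_lt hab
  have hd : d ≠ 0 := fin_ne_zero_of_lt hcd
  by_cases ha : a = 0
  · subst ha
    by_cases hc : c = 0
    · subst hc
      exact Ideal.mul_mem_left _ _ (corner_mem hb hd)
    · have := sub_mem (Ideal.mul_mem_left _ (X ((0 : Fin m), c)) (corner_mem (K := K) hb hd))
        (Ideal.mul_mem_left _ (X ((0 : Fin m), d)) (corner_mem (K := K) hb hc))
      convert this using 1
      ring
  · by_cases hc : c = 0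
    · subst hc
      have := sub_mem
        (Ideal.mul_mem_left _ (X (a, (0 : Fin n))) (corner_mem (K := K) hb hd))
        (Ideal.mul_mem_left _ (X (b, (0 : Fin n))) (corner_mem (K := K) ha hd))
      convert this using 1
      ring
    · exact inner_mem hab ha hc hd

lemma term_mem {a b : Fin m} {c d : Fin n} (hab : a < b) (hcd : c < d)
    (s : (Fin m × Fin n) →₀ ℕ) (k : K)
    (h1 : (∃ j : Fin n, s ((0 : Fin m), j) ≠ 0) ∨ a = 0)
    (h2 : (∃ i : Fin m, s (i, (0 : Fin n)) ≠ 0) ∨ c = 0) :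
    (monomial s k * (X (a, c) * X (b, d) - X (a, d) * X (b, c)) :
      MvPolynomial (Fin m × Fin n) K) ∈ rhsIdeal K m n := by
  classical
  have hb : b ≠ 0 := fin_ne_zero_of_lt hab
  have hd : d ≠ 0 := fin_ne_zero_of_lt hcd
  by_cases h0 : s ((0 : Fin m), (0 : Fin n)) ≠ 0
  · obtain ⟨t, -, ht⟩ := monomial_dvd s k _ h0
    rw [ht, mul_assoc]
    exact Ideal.mul_mem_left _ _ (x_mul_minor_mem hab hcd)
  rw [not_not] at h0
  by_cases hac : a = 0 ∧ c = 0
  · obtain ⟨rfl, rfl⟩ := hac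
    exact Ideal.mul_mem_left _ _ (corner_mem hb hd)
  rcases h1 with ⟨j, hj⟩ | rfl
  · have hj0 : j ≠ 0 := by rintro rfl; exact hj h0
    obtain ⟨t, hst, ht⟩ := monomial_dvd s k _ hj
    rcases h2 with ⟨i, hi⟩ | rfl
    · have hi0 : i ≠ 0 := by rintro rfl; exact hi h0
      have hti : t (i, (0 : Fin n)) ≠ 0 := by
        intro h
        apply hi
        rw [hst]
        simp [h, Ne.symm hi0]
      obtain ⟨t', -, ht'⟩ := monomial_dvd t k _ hti
      rw [ht, ht']
      have := sub_mem (Ideal.mul_mem_left _ (monomial t' k * X (i, j))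
          (x_mul_minor_mem (K := K) hab hcd))
        (Ideal.mul_mem_left _ (monomial t' k * (X (a, c) * X (b, d) - X (a, d) * X (b, c)))
          (corner_mem (K := K) hi0 hj0))
      convert this using 1
      ring
    · have ha : a ≠ 0 := fun h => hac ⟨h, rfl⟩
      rw [ht]
      have := Ideal.mul_mem_left _ (monomial t k) (sub_mem (add_mem
          (inner_mem (K := K) hab ha hj0 hd)
          (Ideal.mul_mem_left _ (X (a, d)) (corner_mem (K := K) hb hj0)))
          (Ideal.mul_mem_left _ (X (b, d)) (corner_mem (K := K) ha hj0)))
      convert this using 1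
      ring
  · have hc : c ≠ 0 := fun h => hac ⟨rfl, h⟩
    rcases h2 with ⟨i, hi⟩ | rfl
    · have hi0 : i ≠ 0 := by rintro rfl; exact hi h0
      obtain ⟨t, hst, ht⟩ := monomial_dvd s k _ hi
      rw [ht]
      -- X(i,0) * (X(0,c) X(b,d) - X(0,d) X(b,c))
      have hin : (X ((0 : Fin m), (0 : Fin n)) * (X (i, c) * X (b, d) - X (i, d) * X (b, c)) :
          MvPolynomial (Fin m × Fin n) K) ∈ rhsIdeal K m n := by
        rcases lt_trichotomy i b with h | h | h
        · exact inner_mem h hi0 hc hd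
        · subst h
          have : (X (i, c) * X (i, d) - X (i, d) * X (i, c) :
            MvPolynomial (Fin m × Fin n) K) = 0 := by ring
          rw [this, mul_zero]
          exact zero_mem _
        · have := inner_mem (K := K) h hb hd hc
          convert this using 1
          ring
      have := Ideal.mul_mem_left _ (monomial t k) (sub_mem (add_mem hin
          (Ideal.mul_mem_left _ (X (b, c)) (corner_mem (K := K) hi0 hd)))
          (Ideal.mul_mem_left _ (X (b, d)) (corner_mem (K := K) hi0 hc)))
      convert this using 1
      ring
    · exact absurd rfl hc

lemma proj_term_mem {a b : Fin m} {c d : Fin n} (hab : a < b) (hcd : c < d)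
    (s : (Fin m × Fin n) →₀ ℕ) (k : K) :
    projGood K m n (monomial s k * (X (a, c) * X (b, d) - X (a, d) * X (b, c)))
      ∈ rhsIdeal K m n := by
  have hb : b ≠ 0 := fin_ne_zero_of_lt hab
  have hd : d ≠ 0 := fin_ne_zero_of_lt hcd
  have e : (monomial s k * (X (a, c) * X (b, d) - X (a, d) * X (b, c)) :
      MvPolynomial (Fin m × Fin n) K) =
      monomial (s + Finsupp.single (a, c) 1 + Finsupp.single (b, d) 1) k -
      monomial (s + Finsupp.single (a, d) 1 + Finsupp.single (b, c) 1) k := by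
    simp only [mul_sub, X, monomial_mul, mul_one, add_assoc]
  by_cases h : ((∃ j : Fin n, s ((0 : Fin m), j) ≠ 0) ∨ a = 0) ∧
      ((∃ i : Fin m, s (i, (0 : Fin n)) ≠ 0) ∨ c = 0)
  · have h1 : goodExp (s + Finsupp.single (a, c) 1 + Finsupp.single (b, d) 1) := by
      rw [goodExp_add]; tauto
    have h2 : goodExp (s + Finsupp.single (a, d) 1 + Finsupp.single (b, c) 1) := by
      rw [goodExp_add]; tauto
    have := term_mem hab hcd s k h.1 h.2
    rw [e] at this ⊢
    rwa [map_sub, projGood_monomial, projGood_monomial, if_pos h1, if_pos h2]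
  · have h1 : ¬ goodExp (s + Finsupp.single (a, c) 1 + Finsupp.single (b, d) 1) := by
      rw [goodExp_add]; tauto
    have h2 : ¬ goodExp (s + Finsupp.single (a, d) 1 + Finsupp.single (b, c) 1) := by
      rw [goodExp_add]; tauto
    rw [e, map_sub, projGood_monomial, projGood_monomial, if_neg h1, if_neg h2, sub_zero]
    exact zero_mem _

lemma proj_mem (f : MvPolynomial (Fin m × Fin n) K) (hf : f ∈ detIdeal2 K m n) :
    ∀ q, projGood K m n (q * f) ∈ rhsIdeal K m n := by
  unfold detIdeal2 at hf
  induction hf using Submodule.span_induction with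
  | mem x hx =>
    obtain ⟨a, b, c, d, hab, hcd, rfl⟩ := hx
    intro q
    rw [q.as_sum, Finset.sum_mul, map_sum]
    exact sum_mem fun s _ => proj_term_mem hab hcd s _
  | zero => intro q; simp
  | add x y _ _ hx hy =>
    intro q
    rw [mul_add, map_add]
    exact add_mem (hx q) (hy q)
  | smul a x _ hx =>
    intro q
    rw [smul_eq_mul, ← mul_assoc]
    exact hx _

end Aux

theorem statement17 (K : Type*) [Field K] (m n : ℕ) [NeZero m] [NeZero n]
    (hm : 2 < m) (hn : 2 < n) :
    detIdeal2 K m n ⊓ rowIdeal K m n ⊓ colIdeal K m n =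
      cornerIdealAll K m n +
        Ideal.span {(X ((0 : Fin m), (0 : Fin n)) : MvPolynomial (Fin m × Fin n) K)} *
          detIdeal2_22 K m n := by
  apply le_antisymm
  · rintro f ⟨⟨hf, hH⟩, hV⟩
    have h := proj_mem f hf 1
    rw [one_mul, projGood_eq_self] at h
    · exact h
    · intro s hs
      exact ⟨(mem_row_iff f).1 hH s hs, (mem_col_iff f).1 hV s hs⟩
  · have hr : ∀ j : Fin n, (X ((0 : Fin m), j) : MvPolynomial (Fin m × Fin n) K)
        ∈ rowIdeal K m n := fun j => Ideal.subset_span ⟨j, rfl⟩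
    have hcl : ∀ i : Fin m, (X (i, (0 : Fin n)) : MvPolynomial (Fin m × Fin n) K)
        ∈ colIdeal K m n := fun i => Ideal.subset_span ⟨i, rfl⟩
    refine sup_le ?_ ?_
    · refine Ideal.span_le.2 ?_
      rintro _ ⟨i, j, hi, hj, rfl⟩
      refine ⟨⟨Ideal.subset_span ⟨0, i, 0, j, fin_pos_of_ne_zero hi, fin_pos_of_ne_zero hj, rfl⟩,
        ?_⟩, ?_⟩
      · exact sub_mem (Ideal.mul_mem_right _ _ (hr 0)) (Ideal.mul_mem_right _ _ (hr j))
      · exact sub_mem (Ideal.mul_mem_right _ _ (hcl 0)) (Ideal.mul_mem_left _ _ (hcl i))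
    · refine le_inf (le_inf (Ideal.mul_le_right.trans ?_) (Ideal.mul_le_left.trans ?_))
        (Ideal.mul_le_left.trans ?_)
      · refine Ideal.span_mono ?_
        rintro _ ⟨a, b, c, d, hab, hcd, -, -, rfl⟩
        exact ⟨a, b, c, d, hab, hcd, rfl⟩
      · rw [Ideal.span_singleton_le_iff_mem]
        exact hr 0
      · rw [Ideal.span_singleton_le_iff_mem]
        exact hcl 0
end

section
/- Let m, n > 2 and let C be the set of all corner minors of M, so that I(C) = (x₁₁x_{ij} − x_{1j}x_{i1} : 2 ≤ i ≤ m, 2 ≤ j ≤ n) ⊆ S. Then the colon ideal (I(C) + x₁₁·I₂(M_{2,2})) : x₁₁ equals I₂(M). -/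
open MvPolynomial

section Helpers

variable {K : Type*} [Field K] {m n : ℕ}

/-- All 2-minors, in any index order, lie in `detIdeal2`. -/
theorem aux_minor_mem (a b : Fin m) (c d : Fin n) :
    (X (a, c) * X (b, d) - X (a, d) * X (b, c) : MvPolynomial (Fin m × Fin n) K)
      ∈ detIdeal2 K m n := by
  have key : ∀ (a b : Fin m) (c d : Fin n), a < b → c < d →
      (X (a, c) * X (b, d) - X (a, d) * X (b, c) : MvPolynomial (Fin m × Fin n) K)
      ∈ detIdeal2 K m n := fun a b c d h1 h2 =>
    Ideal.subset_span ⟨a, b, c, d, h1, h2, rfl⟩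
  rcases lt_trichotomy a b with h | h | h
  · rcases lt_trichotomy c d with h' | h' | h'
    · exact key a b c d h h'
    · subst h'; simp
    · have := (detIdeal2 K m n).neg_mem (key a b d c h h')
      convert this using 1; ring
  · subst h
    convert (detIdeal2 K m n).zero_mem using 1; ring
  · rcases lt_trichotomy c d with h' | h' | h'
    · have := (detIdeal2 K m n).neg_mem (key b a c d h h')
      convert this using 1; ring
    · subst h'; simp
    · have := key b a d c h h'
      convert this using 1; ring

/-- Monomials with the same margins are congruent modulo the 2-minors. -/
theorem aux_cong (s : Multiset (Fin m × Fin n)) : ∀ t : Multiset (Fin m × Fin n),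
    s.map Prod.fst = t.map Prod.fst → s.map Prod.snd = t.map Prod.snd →
    ((s.map X).prod - (t.map X).prod : MvPolynomial (Fin m × Fin n) K) ∈ detIdeal2 K m n := by
  induction s using Multiset.induction with
  | empty =>
    intro t h1 _
    have : t = 0 := by simpa using h1.symm
    subst this; simp
  | cons p s ih =>
    intro t h1 h2
    obtain ⟨i, j⟩ := p
    by_cases hp : (i, j) ∈ t
    · obtain ⟨t, rfl⟩ := Multiset.exists_cons_of_mem hp
      simp only [Multiset.map_cons, Multiset.cons_inj_right] at h1 h2
      have := (detIdeal2 K m n).mul_mem_left (X (i, j)) (ih t h1 h2)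
      simp only [Multiset.map_cons, Multiset.prod_cons]
      convert this using 1; ring
    · have hi : i ∈ t.map Prod.fst := by rw [← h1]; simp
      have hj : j ∈ t.map Prod.snd := by rw [← h2]; simp
      obtain ⟨⟨i', d⟩, hd, hd'⟩ := Multiset.mem_map.1 hi
      obtain ⟨⟨b, j'⟩, hb, hb'⟩ := Multiset.mem_map.1 hj
      simp only at hd' hb'
      subst hd' hb'
      obtain ⟨t, rfl⟩ := Multiset.exists_cons_of_mem hd
      have hb2 : (b, j') ∈ t := by
        rcases Multiset.mem_cons.1 hb with h | h
        · exfalso; apply hp; rw [Prod.mk.injEq] at h; rw [h.2]; exact hd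
        · exact h
      obtain ⟨t, rfl⟩ := Multiset.exists_cons_of_mem hb2
      have e1 : s.map Prod.fst = ((b, d) ::ₘ t).map Prod.fst := by
        simpa using h1
      have e2 : s.map Prod.snd = ((b, d) ::ₘ t).map Prod.snd := by
        simp only [Multiset.map_cons] at h2 ⊢
        rw [Multiset.cons_swap] at h2
        simpa using h2
      have A := (detIdeal2 K m n).mul_mem_left (X (i', j')) (ih _ e1 e2)
      have B := (detIdeal2 K m n).mul_mem_left ((t.map X).prod)
        (aux_minor_mem (K := K) i' b j' d)
      have C := (detIdeal2 K m n).add_mem A B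
      simp only [Multiset.map_cons, Multiset.prod_cons] at C ⊢
      convert C using 1; ring

/-- The Segre map. -/
noncomputable def auxPhi (K : Type*) [Field K] (m n : ℕ) :
    MvPolynomial (Fin m × Fin n) K →ₐ[K] MvPolynomial (Fin m ⊕ Fin n) K :=
  aeval fun p => X (Sum.inl p.1) * X (Sum.inr p.2)

/-- The margins of a monomial. -/
def auxMarg (s : Multiset (Fin m × Fin n)) : Multiset (Fin m ⊕ Fin n) :=
  s.map (fun p => Sum.inl p.1) + s.map (fun p => Sum.inr p.2)

theorem aux_marg_cons (p : Fin m × Fin n) (s : Multiset (Fin m × Fin n)) :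
    auxMarg (p ::ₘ s) = Sum.inl p.1 ::ₘ Sum.inr p.2 ::ₘ auxMarg s := by
  simp [auxMarg, Multiset.cons_swap]

theorem aux_marg_fst (s : Multiset (Fin m × Fin n)) :
    (auxMarg s).filterMap Sum.getLeft? = s.map Prod.fst := by
  induction s using Multiset.induction with
  | empty => simp [auxMarg]
  | cons p s ih =>
    rw [aux_marg_cons, Multiset.filterMap_cons_some Sum.getLeft? _ _ (b := p.1) rfl,
      Multiset.filterMap_cons_none _ _ rfl, ih, Multiset.map_cons]

theorem aux_marg_snd (s : Multiset (Fin m × Fin n)) :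
    (auxMarg s).filterMap Sum.getRight? = s.map Prod.snd := by
  induction s using Multiset.induction with
  | empty => simp [auxMarg]
  | cons p s ih =>
    rw [aux_marg_cons, Multiset.filterMap_cons_none _ _ rfl,
      Multiset.filterMap_cons_some Sum.getRight? _ _ (b := p.2) rfl, ih, Multiset.map_cons]

theorem aux_mon {σ : Type*} [DecidableEq σ] (s : Multiset σ) :
    ((s.map X).prod : MvPolynomial σ K) = monomial (Multiset.toFinsupp s) 1 := by
  induction s using Multiset.induction with
  | empty => simp
  | cons p s ih =>
    rw [Multiset.map_cons, Multiset.prod_cons, ih, ← Multiset.singleton_add, map_add,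
      Multiset.toFinsupp_singleton, X, monomial_mul, one_mul]

theorem aux_phi_mon (s : Multiset (Fin m × Fin n)) :
    auxPhi K m n (s.map X).prod = ((auxMarg s).map X).prod := by
  rw [map_multiset_prod]
  simp [auxMarg, auxPhi, Multiset.map_map, Multiset.prod_map_mul]

open Classical in
/-- A linear section of the Segre map modulo 2-minors. -/
noncomputable def auxPsi (K : Type*) [Field K] (m n : ℕ) :
    MvPolynomial (Fin m ⊕ Fin n) K →ₗ[K] (MvPolynomial (Fin m × Fin n) K ⧸ detIdeal2 K m n) :=
  (basisMonomials (Fin m ⊕ Fin n) K).constr K fun a =>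
    if h : ∃ s : Multiset (Fin m × Fin n), Multiset.toFinsupp (auxMarg s) = a then
      Ideal.Quotient.mk _ ((h.choose.map X).prod) else 0

theorem aux_psi_mon (s : Multiset (Fin m × Fin n)) :
    auxPsi K m n (((auxMarg s).map X).prod) = Ideal.Quotient.mk _ ((s.map X).prod) := by
  classical
  rw [aux_mon (auxMarg s)]
  have hb : (monomial (Multiset.toFinsupp (auxMarg s)) 1 : MvPolynomial (Fin m ⊕ Fin n) K) =
    basisMonomials (Fin m ⊕ Fin n) K (Multiset.toFinsupp (auxMarg s)) := by simp
  have h : ∃ t : Multiset (Fin m × Fin n),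
    Multiset.toFinsupp (auxMarg t) = Multiset.toFinsupp (auxMarg s) := ⟨s, rfl⟩
  have hc : auxMarg h.choose = auxMarg s := Multiset.toFinsupp.injective h.choose_spec
  rw [hb, auxPsi, Module.Basis.constr_basis]
  rw [dif_pos (by convert h), Ideal.Quotient.eq]
  apply aux_cong
  · rw [← aux_marg_fst, ← aux_marg_fst]; congr 1
  · rw [← aux_marg_snd, ← aux_marg_snd]; congr 1

theorem aux_psi_phi (f : MvPolynomial (Fin m × Fin n) K) :
    auxPsi K m n (auxPhi K m n f) = Ideal.Quotient.mk _ f := by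
  classical
  have : (auxPsi K m n) ∘ₗ (auxPhi K m n).toLinearMap =
      (Ideal.Quotient.mkₐ K (detIdeal2 K m n)).toLinearMap := by
    apply (basisMonomials (Fin m × Fin n) K).ext
    intro a
    obtain ⟨s, rfl⟩ := Multiset.toFinsupp.surjective a
    have := aux_psi_mon (K := K) s
    rw [← aux_phi_mon, aux_mon] at this
    simpa using this
  exact LinearMap.congr_fun this f

theorem aux_mem_iff (f : MvPolynomial (Fin m × Fin n) K) :
    f ∈ detIdeal2 K m n ↔ auxPhi K m n f = 0 := by
  constructor
  · intro h
    have : detIdeal2 K m n ≤ RingHom.ker (auxPhi K m n) := by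
      refine Ideal.span_le.2 ?_
      rintro _ ⟨a, b, c, d, -, -, rfl⟩
      simp only [SetLike.mem_coe, RingHom.mem_ker, auxPhi, map_sub, map_mul, aeval_X]
      ring
    exact this h
  · intro h
    rw [← Ideal.Quotient.eq_zero_iff_mem, ← aux_psi_phi, h, map_zero]

end Helpers

theorem statement18 (K : Type*) [Field K] (m n : ℕ) [NeZero m] [NeZero n]
    (hm : 2 < m) (hn : 2 < n) :
    (cornerIdealAll K m n +
        Ideal.span {(X ((0 : Fin m), (0 : Fin n)) : MvPolynomial (Fin m × Fin n) K)} *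
          detIdeal2_22 K m n).colon
      (Ideal.span {(X ((0 : Fin m), (0 : Fin n)) : MvPolynomial (Fin m × Fin n) K)}) =
      detIdeal2 K m n := by
  
  have hJ : (cornerIdealAll K m n +
        Ideal.span {(X ((0 : Fin m), (0 : Fin n)) : MvPolynomial (Fin m × Fin n) K)} *
          detIdeal2_22 K m n) ≤ detIdeal2 K m n := by
    refine sup_le ?_ (le_trans Ideal.mul_le_right ?_)
    · refine Ideal.span_le.2 ?_
      rintro _ ⟨i, j, -, -, rfl⟩
      exact aux_minor_mem (K := K) _ _ _ _
    · refine Ideal.span_le.2 ?_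
      rintro _ ⟨a, b, c, d, -, -, -, -, rfl⟩
      exact aux_minor_mem (K := K) _ _ _ _
  have hC : ∀ (i : Fin m) (j : Fin n), i ≠ 0 → j ≠ 0 →
      (X ((0 : Fin m), (0 : Fin n)) * X (i, j) - X ((0 : Fin m), j) * X (i, (0 : Fin n)) :
        MvPolynomial (Fin m × Fin n) K) ∈ (cornerIdealAll K m n +
        Ideal.span {(X ((0 : Fin m), (0 : Fin n)) : MvPolynomial (Fin m × Fin n) K)} *
          detIdeal2_22 K m n) := fun i j hi hj =>
    Ideal.mem_sup_left (Ideal.subset_span ⟨i, j, hi, hj, rfl⟩)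
  have hD : ∀ g ∈ detIdeal2_22 K m n, X ((0 : Fin m), (0 : Fin n)) * g ∈ (cornerIdealAll K m n +
        Ideal.span {(X ((0 : Fin m), (0 : Fin n)) : MvPolynomial (Fin m × Fin n) K)} *
          detIdeal2_22 K m n) := fun g hg =>
    Ideal.mem_sup_right (Ideal.mul_mem_mul (Ideal.mem_span_singleton_self _) hg)
  generalize (cornerIdealAll K m n +
        Ideal.span {(X ((0 : Fin m), (0 : Fin n)) : MvPolynomial (Fin m × Fin n) K)} *
          detIdeal2_22 K m n) = J at hJ hC hD ⊢
  apply le_antisymm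
  · intro f hf
    have h1 := hJ (Submodule.mem_colon.1 hf _ (Ideal.mem_span_singleton_self _))
    rw [smul_eq_mul, aux_mem_iff, map_mul] at h1
    rw [aux_mem_iff]
    refine (mul_eq_zero.1 h1).resolve_right ?_
    simp [auxPhi, X_ne_zero]
  · refine Ideal.span_le.2 ?_
    rintro _ ⟨a, b, c, d, hab, hcd, rfl⟩
    refine Submodule.mem_colon.2 ?_
    intro p hp
    obtain ⟨q, rfl⟩ := Ideal.mem_span_singleton'.1 hp
    have hb : b ≠ 0 := by rintro rfl; exact absurd hab (Fin.not_lt_zero a)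
    have hd : d ≠ 0 := by rintro rfl; exact absurd hcd (Fin.not_lt_zero c)
    suffices H : X ((0 : Fin m), (0 : Fin n)) *
        (X (a, c) * X (b, d) - X (a, d) * X (b, c)) ∈ J by
      have := J.mul_mem_left q H
      rw [smul_eq_mul]
      convert this using 1; ring
    by_cases ha : a = 0
    · subst ha
      by_cases hc : c = 0
      · subst hc
        exact J.mul_mem_left _ (hC b d hb hd)
      · have := J.sub_mem (J.mul_mem_left (X (0, c)) (hC b d hb hd))
          (J.mul_mem_left (X (0, d)) (hC b c hb hc))
        convert this using 1; ring
    · by_cases hc : c = 0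
      · subst hc
        have := J.sub_mem (J.mul_mem_left (X (a, 0)) (hC b d hb hd))
          (J.mul_mem_left (X (b, 0)) (hC a d ha hd))
        convert this using 1; ring
      · exact hD _ (Ideal.subset_span ⟨a, b, c, d, hab, hcd, ha, hc, rfl⟩)
end

section
/- Let m, n > 2 and let C be the set of all corner minors of M, so that I(C) = (x₁₁x_{ij} − x_{1j}x_{i1} : 2 ≤ i ≤ m, 2 ≤ j ≤ n) ⊆ S. Then the colon ideal (I(C) + x₁₁·I₂(M_{2,2}) + H² + V²) : x₁₁ equals H + V + I₂(M_{2,2}), where H and V are the ideals generated by the first-row and first-column variables, respectively. -/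
open MvPolynomial

/-- A derivation sends the square of an ideal into the ideal. -/
lemma der_sq {K S : Type*} [CommRing K] [CommRing S] [Algebra K S] (D : Derivation K S S)
    (I : Ideal S) {p : S} (hp : p ∈ I ^ 2) : D p ∈ I := by
  rw [pow_two] at hp
  refine Submodule.mul_induction_on hp (fun a ha b hb => ?_) (fun a b ha hb => ?_)
  · rw [D.leibniz, smul_eq_mul, smul_eq_mul]
    exact I.add_mem (I.mul_mem_right _ ha) (I.mul_mem_right _ hb)
  · rw [map_add]; exact I.add_mem ha hb

/-- A derivation preserving the generators' ideal preserves the ideal. -/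
lemma der_span {K S : Type*} [CommRing K] [CommRing S] [Algebra K S] (D : Derivation K S S)
    (s : Set S) (hs : ∀ x ∈ s, D x ∈ Ideal.span s) {p : S} (hp : p ∈ Ideal.span s) :
    D p ∈ Ideal.span s := by
  induction hp using Submodule.span_induction with
  | mem x h => exact hs x h
  | zero => simp
  | add x y _ _ hx hy => rw [map_add]; exact Ideal.add_mem _ hx hy
  | smul a x hx h =>
    rw [smul_eq_mul, D.leibniz, smul_eq_mul, smul_eq_mul]
    exact Ideal.add_mem _ (Ideal.mul_mem_left _ _ h) (Ideal.mul_mem_right _ _ hx)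

/-- A derivation preserving an ideal preserves its square. -/
lemma der_sq_sq {K S : Type*} [CommRing K] [CommRing S] [Algebra K S] (D : Derivation K S S)
    (I : Ideal S) (hI : ∀ x ∈ I, D x ∈ I) {p : S} (hp : p ∈ I ^ 2) : D p ∈ I ^ 2 := by
  rw [pow_two] at hp ⊢
  refine Submodule.mul_induction_on hp (fun a ha b hb => ?_) (fun a b ha hb => ?_)
  · rw [D.leibniz, smul_eq_mul, smul_eq_mul]
    exact Ideal.add_mem _ (Ideal.mul_mem_mul ha (hI b hb)) (Ideal.mul_mem_mul hb (hI a ha))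
  · rw [map_add]; exact Ideal.add_mem _ ha hb

/-- The second order operator `∂₁₁ + ∑ x_{ij} ∂_{1j} ∂_{i1}`. -/
noncomputable def opPhi (K : Type*) [Field K] (m n : ℕ) [NeZero m] [NeZero n]
    (p : MvPolynomial (Fin m × Fin n) K) : MvPolynomial (Fin m × Fin n) K :=
  pderiv ((0 : Fin m), (0 : Fin n)) p +
    ∑ i : Fin m, ∑ j : Fin n, if i ≠ 0 ∧ j ≠ 0 then
      X (i, j) * pderiv ((0 : Fin m), j) (pderiv (i, (0 : Fin n)) p) else 0

lemma opPhi_add (K : Type*) [Field K] (m n : ℕ) [NeZero m] [NeZero n]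
    (p q : MvPolynomial (Fin m × Fin n) K) :
    opPhi K m n (p + q) = opPhi K m n p + opPhi K m n q := by
  have h : ∀ (i : Fin m) (j : Fin n), (if i ≠ 0 ∧ j ≠ 0 then
      (X (i, j) : MvPolynomial (Fin m × Fin n) K) *
        pderiv ((0 : Fin m), j) (pderiv (i, (0 : Fin n)) (p + q)) else 0) =
      (if i ≠ 0 ∧ j ≠ 0 then X (i, j) *
        pderiv ((0 : Fin m), j) (pderiv (i, (0 : Fin n)) p) else 0) +
      (if i ≠ 0 ∧ j ≠ 0 then X (i, j) *
        pderiv ((0 : Fin m), j) (pderiv (i, (0 : Fin n)) q) else 0) := by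
    intro i j
    split_ifs <;> simp [mul_add]
  unfold opPhi
  simp only [h, Finset.sum_add_distrib]
  rw [map_add]
  ring

/-- Criterion for `opPhi p` to be in `W`. -/
lemma opPhi_mem (K : Type*) [Field K] (m n : ℕ) [NeZero m] [NeZero n]
    (W : Ideal (MvPolynomial (Fin m × Fin n) K)) (p : MvPolynomial (Fin m × Fin n) K)
    (h0 : pderiv ((0 : Fin m), (0 : Fin n)) p ∈ W)
    (h1 : ∀ i j, i ≠ 0 → j ≠ 0 → pderiv ((0 : Fin m), j) (pderiv (i, (0 : Fin n)) p) ∈ W) :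
    opPhi K m n p ∈ W := by
  refine W.add_mem h0 (W.sum_mem fun i _ => W.sum_mem fun j _ => ?_)
  split_ifs with h
  · exact W.mul_mem_left _ (h1 i j h.1 h.2)
  · exact W.zero_mem

lemma opPhi_x11 (K : Type*) [Field K] (m n : ℕ) [NeZero m] [NeZero n]
    (W : Ideal (MvPolynomial (Fin m × Fin n) K))
    (hx : X ((0 : Fin m), (0 : Fin n)) ∈ W) (f : MvPolynomial (Fin m × Fin n) K) :
    opPhi K m n (X (0, 0) * f) - f ∈ W := by
  unfold opPhi
  rw [add_sub_right_comm]
  refine W.add_mem ?_ (W.sum_mem fun i _ => W.sum_mem fun j _ => ?_)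
  · rw [Derivation.leibniz, pderiv_X_self]
    simpa using W.mul_mem_right _ hx
  · split_ifs with h
    · rw [Derivation.leibniz, pderiv_X_of_ne (by simp [Ne.symm h.1]), smul_zero, add_zero,
        smul_eq_mul, Derivation.leibniz, pderiv_X_of_ne (by simp [Ne.symm h.2]), smul_zero,
        add_zero, smul_eq_mul]
      exact W.mul_mem_left _ (W.mul_mem_right _ hx)
    · exact W.zero_mem

lemma opPhi_corner (K : Type*) [Field K] (m n : ℕ) [NeZero m] [NeZero n]
    (W : Ideal (MvPolynomial (Fin m × Fin n) K))
    (hr : ∀ j : Fin n, X ((0 : Fin m), j) ∈ W) (hc : ∀ i : Fin m, X (i, (0 : Fin n)) ∈ W)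
    (k : Fin m) (l : Fin n) (hk : k ≠ 0) (hl : l ≠ 0) (g : MvPolynomial (Fin m × Fin n) K) :
    opPhi K m n (g * (X (0, 0) * X (k, l) - X (0, l) * X (k, 0))) ∈ W := by
  have e : g * (X (0, 0) * X (k, l) - X (0, l) * X (k, 0)) =
      X (0, 0) * (g * X (k, l)) + - (g * (X (0, l) * X (k, 0))) := by ring
  -- second-order part of the mixed term
  have h2 : opPhi K m n (- (g * (X (0, l) * X (k, 0)))) + g * X (k, l) ∈ W := by
    have hs : g * X (k, l) = ∑ i : Fin m, ∑ j : Fin n,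
        if i = k ∧ j = l then g * X (i, j) else 0 := by
      rw [Finset.sum_eq_single k, Finset.sum_eq_single l]
      · simp
      · intro b _ hb; simp [hb]
      · simp
      · intro b _ hb; simp [hb]
      · simp
    rw [hs]
    unfold opPhi
    rw [add_assoc, ← Finset.sum_add_distrib]
    refine W.add_mem ?_ (W.sum_mem fun i _ => ?_)
    · rw [map_neg, Derivation.leibniz, Derivation.leibniz, pderiv_X_of_ne (by simp [hk]),
        pderiv_X_of_ne (by simp [hl])]
      simp only [smul_eq_mul, mul_zero, add_zero, zero_add]
      exact W.neg_mem (W.mul_mem_right _ (W.mul_mem_right _ (hr l)))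
    · rw [← Finset.sum_add_distrib]
      refine W.sum_mem fun j _ => ?_
      by_cases h : i ≠ 0 ∧ j ≠ 0
      · rw [if_pos h]
        obtain ⟨hi, hj⟩ := h
        have a1 : pderiv (i, (0 : Fin n)) (X ((0 : Fin m), l) : MvPolynomial (Fin m × Fin n) K)
            = 0 := pderiv_X_of_ne (by simp [hl])
        have a2 : pderiv ((0 : Fin m), j) (X (k, (0 : Fin n)) : MvPolynomial (Fin m × Fin n) K)
            = 0 := pderiv_X_of_ne (by simp [hk])
        have a3 : pderiv (i, (0 : Fin n)) (X (k, (0 : Fin n)) : MvPolynomial (Fin m × Fin n) K)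
            = if i = k then 1 else 0 := by
          rw [pderiv_X]
          by_cases hh : i = k
          · subst hh; simp
          · rw [if_neg hh, Pi.single_eq_of_ne]; simpa using fun h => hh h.symm
        have a4 : pderiv ((0 : Fin m), j) (X ((0 : Fin m), l) : MvPolynomial (Fin m × Fin n) K)
            = if j = l then 1 else 0 := by
          rw [pderiv_X]
          by_cases hh : j = l
          · subst hh; simp
          · rw [if_neg hh, Pi.single_eq_of_ne]; simpa using fun h => hh h.symm
        have w1 := hr l
        have w2 := hc k
        by_cases hik : i = k <;> by_cases hjl : j = l
        all_goals
          simp only [hik, hjl, if_true, if_false] at a1 a2 a3 a4 ⊢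
          simp only [map_neg, Derivation.leibniz, map_add, smul_eq_mul, a1, a2, a3, a4,
            if_true, if_false, and_true, and_false, mul_zero, mul_one, add_zero, zero_add,
            map_zero, true_and, false_and, Derivation.map_one_eq_zero, and_self]
          rw [← Ideal.Quotient.eq_zero_iff_mem] at w1 w2 ⊢
          simp only [map_neg, map_add, map_mul, w1, w2]
          try ring
      · rw [if_neg h, if_neg, add_zero]
        · exact W.zero_mem
        · rintro ⟨rfl, rfl⟩; exact h ⟨hk, hl⟩
  have h1 : opPhi K m n (X (0, 0) * (g * X (k, l))) - g * X (k, l) ∈ W :=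
    opPhi_x11 K m n W (hr 0) (g * X (k, l))
  rw [e, opPhi_add]
  have := W.add_mem h1 h2
  convert this using 1
  ring

theorem statement19 (K : Type*) [Field K] (m n : ℕ) [NeZero m] [NeZero n]
    (hm : 2 < m) (hn : 2 < n) :
    (cornerIdealAll K m n +
        Ideal.span {(X ((0 : Fin m), (0 : Fin n)) : MvPolynomial (Fin m × Fin n) K)} *
          detIdeal2_22 K m n +
        rowIdeal K m n ^ 2 + colIdeal K m n ^ 2).colon
      (Ideal.span {(X ((0 : Fin m), (0 : Fin n)) : MvPolynomial (Fin m × Fin n) K)}) =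
      rowIdeal K m n + colIdeal K m n + detIdeal2_22 K m n := by
  set W := rowIdeal K m n + colIdeal K m n + detIdeal2_22 K m n with hW
  have hH : rowIdeal K m n ≤ W := le_sup_left.trans le_sup_left
  have hV : colIdeal K m n ≤ W := le_sup_right.trans le_sup_left
  have hI : detIdeal2_22 K m n ≤ W := le_sup_right
  have hr' : ∀ j : Fin n, (X ((0 : Fin m), j) : MvPolynomial (Fin m × Fin n) K) ∈
      rowIdeal K m n := fun j => Ideal.subset_span ⟨j, rfl⟩
  have hc' : ∀ i : Fin m, (X (i, (0 : Fin n)) : MvPolynomial (Fin m × Fin n) K) ∈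
      colIdeal K m n := fun i => Ideal.subset_span ⟨i, rfl⟩
  have hr := fun j => hH (hr' j)
  have hc := fun i => hV (hc' i)
  ext f
  rw [Ideal.mem_colon_span_singleton]
  constructor
  · intro hf
    have hall : ∀ p ∈ cornerIdealAll K m n +
        Ideal.span {(X ((0 : Fin m), (0 : Fin n)) : MvPolynomial (Fin m × Fin n) K)} *
          detIdeal2_22 K m n +
        rowIdeal K m n ^ 2 + colIdeal K m n ^ 2, opPhi K m n p ∈ W := by
      intro p hp
      obtain ⟨q, hq, d, hd, rfl⟩ := Submodule.mem_sup.1 hp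
      obtain ⟨r, hrr, c, hcc, rfl⟩ := Submodule.mem_sup.1 hq
      obtain ⟨a, ha, b, hb, rfl⟩ := Submodule.mem_sup.1 hrr
      rw [opPhi_add, opPhi_add, opPhi_add]
      refine W.add_mem (W.add_mem (W.add_mem ?_ ?_) ?_) ?_
      · suffices h : ∀ g, opPhi K m n (g * a) ∈ W by simpa using h 1
        clear hp hq hrr hf
        unfold cornerIdealAll at ha
        induction ha using Submodule.span_induction with
        | mem x h =>
          obtain ⟨i, j, hi, hj, rfl⟩ := h
          exact opPhi_corner K m n W hr hc i j hi hj
        | zero => intro g; rw [mul_zero]; simp [opPhi]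
        | add x y _ _ hx hy =>
          intro g
          rw [mul_add, opPhi_add]
          exact W.add_mem (hx g) (hy g)
        | smul c x _ hx =>
          intro g
          rw [smul_eq_mul, ← mul_assoc]
          exact hx _
      · obtain ⟨z, hz, rfl⟩ := Ideal.mem_span_singleton_mul.1 hb
        have := W.add_mem (opPhi_x11 K m n W (hr 0) z) (hI hz)
        simpa using this
      · refine opPhi_mem K m n W c (hH (der_sq _ _ hcc)) fun i j hi hj => hH (der_sq _ _ ?_)
        refine der_sq_sq _ _ (fun x hx => der_span _ _ ?_ hx) hcc
        rintro x ⟨j, rfl⟩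
        rw [pderiv_X_of_ne (by simp [Ne.symm hi])]
        exact Ideal.zero_mem _
      · refine opPhi_mem K m n W d (hV (der_sq _ _ hd)) fun i j hi hj => hV ?_
        refine der_span _ _ ?_ (der_sq _ _ hd)
        rintro x ⟨i, rfl⟩
        rw [pderiv_X_of_ne (by simp [Ne.symm hj])]
        exact Ideal.zero_mem _
    have h1 := hall _ hf
    rw [mul_comm] at h1
    have := W.sub_mem h1 (opPhi_x11 K m n W (hr 0) f)
    simpa using this
  · intro hf
    obtain ⟨q, hq, d, hd, rfl⟩ := Submodule.mem_sup.1 hf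
    obtain ⟨a, ha, b, hb, rfl⟩ := Submodule.mem_sup.1 hq
    rw [add_mul, add_mul]
    refine Ideal.add_mem _ (Ideal.add_mem _ ?_ ?_) ?_
    · refine Submodule.mem_sup_left (Submodule.mem_sup_right ?_)
      rw [pow_two]; exact Ideal.mul_mem_mul ha (hr' 0)
    · refine Submodule.mem_sup_right ?_
      rw [pow_two]; exact Ideal.mul_mem_mul hb (hc' 0)
    · refine Submodule.mem_sup_left (Submodule.mem_sup_left (Submodule.mem_sup_right ?_))
      rw [mul_comm d]
      exact Ideal.mul_mem_mul (Ideal.mem_span_singleton_self _) hd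
end
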